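/- arXiv:2212.10473 — 2 statements merged into one kernel-verified Lean document; each statement's English description precedes it below -/
import Mathlib

section
/- Let X and Y be Polish spaces, μ a Borel probability measure on X and ν a Borel probability measure on Y. Let h(x,p) = Ψ(g(p) − f(x)), where f : X → ℝ^d is continuous, g : 𝒫(Y) → ℝ^d is bounded and continuous (for the weak topology on 𝒫(Y)), and Ψ : ℝ^d → ℝ is a nonnegative strictly convex function that is differentiable with locally Lipschitz gradient. Suppose that μ(f⁻¹(A)) = 0 for every set A ⊂ ℝ^d of Hausdorff dimension at most d−1 in case d > 1, and that μ is atomless in case d = 1. If the sublevel sets {p ∈ 𝒫(Y) : g(p) ≤ c} are convex for every c ∈ ℝ^d (with the coordinatewise order on ℝ^d) and Ψ is increasing for the coordinatewise order (Ψ(u) ≤ Ψ(v) whenever u ≤ v coordinatewise), then the infimum of σ ↦ ∫_X Ψ(g(σ^x) − f(x)) μ(dx) over σ ∈ Π(μ,ν) is attained. -/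
/-!
The set `Π(μ, ν)` is compact, but the cost is not lower semicontinuous on it, because the
conditional measures are not continuous in `σ`. The problem is therefore relaxed: the conditional
measure is allowed to be random, so that `σ` is replaced by a law `γ` on `ℝ^d × 𝒫(Y)` with first
marginal the image of `μ` under `f` and with mean measure `ν` (`relaxed`). The cost becomes the
linear functional `∫ Ψ(g(p) - a) γ(da dp)`, which is lower semicontinuous on a compact set
(`lowerSemicontinuous_relaxedCost`, `isCompact_relaxed`); a minimizer `γ` exists, and its cost is
at most that of every `σ`, since the joint law of `f(x)` and `σ^x` is admissible.

It remains to produce a plan at least as good as `γ`, when its cost is finite. Optimality implies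
that, on the support of the law of `(a, g(p))`, exchanging the second coordinates of two points does
not decrease the cost (`exists_monotone_set`). As `Ψ` is `C¹` and strictly convex, the points `a`
with at least two partners `g(p)` then lie in a countable union of Lipschitz graphs over subsets of
hyperplanes, of dimension at most `d - 1`, and they are countably many if `d = 1`
(`dimH_multivalued_le`). Hence, for `d > 1`, the value `g(p)` is almost surely a function `s` of `a`.
If `p` is replaced by its conditional mean given `a`, the convexity of the closed set `{g ≤ s}`
gives `g ≤ s` at the mean (`bary_mem_of_isClosed`), and the cost does not increase because `Ψ` is
increasing. For `d = 1` the same is done outside the countable exceptional set; above each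
exceptional `a` the measure `μ` restricted to `{f = a}` has no atoms, so the conditional law of `p`
given `a` is the image of this measure, suitably normalized, under a map
(`exists_measurable_map_eq_smul`). The resulting map `X → 𝒫(Y)` is the family of conditional
measures of a plan (`exists_map_le`, `exists_condMeas_ae_eq`).
-/

open MeasureTheory ENNReal

noncomputable section

/-- The conditional measures `σ^x` of a probability measure `σ` on a product space with
respect to its first marginal, given by the disintegration `σ(dx dy) = σ^x(dy) μ(dx)`. -/
def condMeas {X Y : Type*} [MeasurableSpace X] [MeasurableSpace Y]
    [StandardBorelSpace Y] [Nonempty Y]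
    (σ : ProbabilityMeasure (X × Y)) (x : X) : ProbabilityMeasure Y :=
  ⟨(σ : Measure (X × Y)).condKernel x, inferInstance⟩

/-! ### The space of probability measures on a Polish space -/

section ProbabilityMeasureSpace

open Filter Topology BoundedContinuousFunction unitInterval

variable {Y : Type*} [MeasurableSpace Y]

theorem measurable_coe_probabilityMeasure :
    Measurable fun p : ProbabilityMeasure Y ↦ (p : Measure Y) :=
  measurable_subtype_coe

theorem measurable_apply_probabilityMeasure {s : Set Y} (hs : MeasurableSet s) :
    Measurable fun p : ProbabilityMeasure Y ↦ (p : Measure Y) s :=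
  (Measure.measurable_coe hs).comp measurable_coe_probabilityMeasure

theorem measurable_lintegral_probabilityMeasure {φ : Y → ℝ≥0∞}
    (hφ : Measurable φ) : Measurable fun p : ProbabilityMeasure Y ↦ ∫⁻ y, φ y ∂(p : Measure Y) :=
  (Measure.measurable_lintegral hφ).comp measurable_coe_probabilityMeasure

variable [TopologicalSpace Y]

/-- The weak topology is generated by the maps `p ↦ ∫ φ dp`, with `φ` bounded continuous. -/
theorem probabilityMeasure_topology_eq_generateFrom [OpensMeasurableSpace Y] :
    (inferInstance : TopologicalSpace (ProbabilityMeasure Y)) = .generateFrom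
      {U | ∃ (φ : Y →ᵇ NNReal) (V : Set ℝ≥0∞), IsOpen V ∧
        U = (fun p : ProbabilityMeasure Y ↦ ∫⁻ y, φ y ∂(p : Measure Y)) ⁻¹' V} := by
  apply le_antisymm
  · refine le_generateFrom ?_
    rintro _ ⟨φ, V, hV, rfl⟩
    exact hV.preimage (ProbabilityMeasure.continuous_lintegral_boundedContinuousFunction φ)
  · rw [← continuous_id_iff_le]
    let τ : TopologicalSpace (ProbabilityMeasure Y) := .generateFrom
      {U | ∃ (φ : Y →ᵇ NNReal) (V : Set ℝ≥0∞), IsOpen V ∧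
        U = (fun p : ProbabilityMeasure Y ↦ ∫⁻ y, φ y ∂(p : Measure Y)) ⁻¹' V}
    refine (ProbabilityMeasure.continuous_iff_forall_continuous_lintegral
      (X := ProbabilityMeasure Y) (μs := id)).2 fun φ ↦ ?_
    refine continuous_def.2 fun V hV ↦ ?_
    exact TopologicalSpace.isOpen_generateFrom_of_mem ⟨φ, V, hV, rfl⟩

/-- The σ-algebra on `𝒫(Y)` generated by the evaluations `p ↦ p B` is the Borel σ-algebra of the
weak topology. -/
theorem borelSpace_probabilityMeasure [BorelSpace Y] [HasOuterApproxClosed Y]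
    [SecondCountableTopology (ProbabilityMeasure Y)] : BorelSpace (ProbabilityMeasure Y) := by
  constructor
  apply le_antisymm
  -- Evaluations at closed sets are decreasing limits of continuous functions of `p`.
  · let mB : MeasurableSpace (ProbabilityMeasure Y) := borel _
    have : BorelSpace (ProbabilityMeasure Y) := ⟨rfl⟩
    have key : Measurable fun p : ProbabilityMeasure Y ↦ (p : Measure Y) := by
      refine Measurable.measure_of_isPiSystem_of_isProbabilityMeasure
        (S := {s | IsClosed s}) ?_ isPiSystem_isClosed ?_
      · rw [BorelSpace.measurable_eq (α := Y), borel_eq_generateFrom_isClosed]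
      · intro F hF
        have hF' : IsClosed F := hF
        refine measurable_of_tendsto_metrizable (f := fun n (p : ProbabilityMeasure Y) ↦
          ∫⁻ y, hF'.apprSeq n y ∂(p : Measure Y)) (fun n ↦ ?_) ?_
        · exact (ProbabilityMeasure.continuous_lintegral_boundedContinuousFunction _).measurable
        · refine tendsto_pi_nhds.2 fun p ↦ ?_
          exact HasOuterApproxClosed.tendsto_lintegral_apprSeq hF' (p : Measure Y)
    exact key.comap_le
  · rw [borel_eq_generateFrom_of_subbasis probabilityMeasure_topology_eq_generateFrom]
    refine MeasurableSpace.generateFrom_le ?_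
    rintro _ ⟨φ, V, hV, rfl⟩
    exact measurable_lintegral_probabilityMeasure
      (φ.continuous.measurable.coe_nnreal_ennreal) hV.measurableSet

/-- Push-forward along a topological embedding of Borel spaces is an embedding for the weak
topologies, by the portmanteau criterion on open sets. -/
theorem isEmbedding_probabilityMeasure_map {Z : Type*} [MeasurableSpace Z] [TopologicalSpace Z]
    [BorelSpace Y] [BorelSpace Z] [TopologicalSpace.PseudoMetrizableSpace Y]
    [TopologicalSpace.PseudoMetrizableSpace Z]
    [TopologicalSpace.SeparableSpace Z] {j : Y → Z} (hj : IsEmbedding j)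
    (hjm : MeasurableEmbedding j) :
    IsEmbedding fun p : ProbabilityMeasure Y ↦ p.map hj.continuous.measurable.aemeasurable := by
  set J := fun p : ProbabilityMeasure Y ↦ p.map hj.continuous.measurable.aemeasurable with hJ
  have hJc : Continuous J := ProbabilityMeasure.continuous_map hj.continuous
  refine ⟨⟨le_antisymm hJc.le_induced ?_⟩, ?_⟩
  · refine le_of_nhds_le_nhds fun p ↦ ?_
    rw [nhds_induced]
    change Tendsto id (comap J (𝓝 (J p))) (𝓝 p)
    refine tendsto_of_forall_isOpen_le_liminf' fun G hG ↦ ?_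
    obtain ⟨G', hG', rfl⟩ := hj.isOpen_iff.1 hG
    have h1 : Tendsto J (comap J (𝓝 (J p))) (𝓝 (J p)) := tendsto_comap
    have h2 := ProbabilityMeasure.le_liminf_measure_open_of_tendsto h1 hG'
    simpa [J, Measure.map_apply hj.continuous.measurable hG'.measurableSet] using h2
  · intro p q hpq
    apply Subtype.ext
    have h : (p : Measure Y).map j = (q : Measure Y).map j :=
      congrArg (fun r : ProbabilityMeasure Z ↦ (r : Measure Z)) hpq
    have h' := congrArg (Measure.comap j) h
    rwa [hjm.comap_map, hjm.comap_map] at h'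

variable [PolishSpace Y] [BorelSpace Y]

/-- `𝒫(Y)` is second countable and standard Borel, since an embedding of `Y` into the Hilbert cube
identifies it with a measurable subset of the compact metrizable space of probability measures on
the cube. -/
theorem secondCountable_standardBorel_probabilityMeasure :
    SecondCountableTopology (ProbabilityMeasure Y) ∧ StandardBorelSpace (ProbabilityMeasure Y) := by
  let _ := TopologicalSpace.upgradeIsCompletelyMetrizable Y
  obtain ⟨j, hj⟩ := Metric.PiNatEmbed.exists_embedding_to_hilbert_cube (X := Y)
  have hjm : MeasurableEmbedding j := hj.continuous.measurableEmbedding hj.injective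
  let _ : MetricSpace (ProbabilityMeasure (ℕ → I)) :=
    TopologicalSpace.metrizableSpaceMetric _
  have : BorelSpace (ProbabilityMeasure (ℕ → I)) := borelSpace_probabilityMeasure
  have hJ := isEmbedding_probabilityMeasure_map hj hjm
  set J := fun p : ProbabilityMeasure Y ↦ p.map hj.continuous.measurable.aemeasurable with hJdef
  have hsc : SecondCountableTopology (ProbabilityMeasure Y) := hJ.secondCountableTopology
  refine ⟨hsc, ?_⟩
  have : BorelSpace (ProbabilityMeasure Y) := borelSpace_probabilityMeasure
  have hrange : MeasurableSet (Set.range J) := by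
    -- The range consists of the measures carried by the measurable set `range j`.
    have : Set.range J = (fun q : ProbabilityMeasure (ℕ → I) ↦
        (q : Measure (ℕ → I)) (Set.range j)) ⁻¹' {1} := by
      ext q
      constructor
      · rintro ⟨p, rfl⟩
        simp [J, Measure.map_apply hj.continuous.measurable hjm.measurableSet_range]
      · intro hq
        have hq : (q : Measure (ℕ → I)) (Set.range j) = 1 := hq
        have hmap : ((q : Measure (ℕ → I)).comap j).map j = q := by
          rw [hjm.map_comap]
          exact Measure.restrict_eq_self_of_ae_mem
            ((prob_compl_eq_zero_iff hjm.measurableSet_range).2 hq)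
        have hp : IsProbabilityMeasure ((q : Measure (ℕ → I)).comap j) := by
          constructor
          rw [hjm.comap_apply, Set.image_univ, hq]
        exact ⟨⟨_, hp⟩, Subtype.ext hmap⟩
    rw [this]
    exact ((Measure.measurable_coe hjm.measurableSet_range).comp measurable_coe_probabilityMeasure)
      (measurableSet_singleton 1)
  have hJm : MeasurableEmbedding J := hJ.measurableEmbedding hrange
  have hcpt : PolishSpace (ProbabilityMeasure (ℕ → I)) := inferInstance
  have hr : StandardBorelSpace (Set.range J) := hrange.standardBorel
  let e := hJm.equivRange
  obtain ⟨τ, hτb, hτp⟩ := hr.polish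
  refine ⟨@TopologicalSpace.induced _ _ e τ, @BorelSpace.mk _ (_) _ ?_,
    @Equiv.polishSpace_induced _ _ τ hτp e.toEquiv⟩
  rw [borel_comap, ← hτb.measurable_eq]
  exact e.measurableEmbedding.comap_eq.symm

instance secondCountableTopology_probabilityMeasure :
    SecondCountableTopology (ProbabilityMeasure Y) :=
  secondCountable_standardBorel_probabilityMeasure.1

instance standardBorelSpace_probabilityMeasure : StandardBorelSpace (ProbabilityMeasure Y) :=
  secondCountable_standardBorel_probabilityMeasure.2

instance borelSpace_probabilityMeasure_polish : BorelSpace (ProbabilityMeasure Y) :=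
  letI := TopologicalSpace.upgradeIsCompletelyMetrizable Y
  borelSpace_probabilityMeasure

instance metrizableSpace_probabilityMeasure_polish :
    TopologicalSpace.MetrizableSpace (ProbabilityMeasure Y) :=
  inferInstance

end ProbabilityMeasureSpace

/-! ### Transport of atomless measures -/

section Transport

open Filter Topology ProbabilityTheory unitInterval

theorem continuous_cdf_of_noAtoms (m : Measure ℝ) [IsProbabilityMeasure m] [NullSingletonClass m] :
    Continuous (cdf m) := by
  rw [continuous_iff_continuousAt]
  intro a
  rw [(monotone_cdf m).continuousAt_iff_leftLim_eq_rightLim]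
  have h1 : (cdf m).measure {a} = 0 := by rw [measure_cdf, measure_singleton]
  rw [StieltjesFunction.measure_singleton, ENNReal.ofReal_eq_zero] at h1
  have h2 := (monotone_cdf m).leftLim_le (le_refl a)
  rw [(cdf m).rightLim_eq]
  linarith

/-- The distribution function of an atomless law pushes this law to the uniform law on `[0,1]`. -/
theorem exists_measurable_map_eq_volume_unitInterval (m : Measure ℝ) [IsProbabilityMeasure m]
    [NullSingletonClass m] : ∃ F : ℝ → I, Measurable F ∧ m.map F = volume := by
  have hc := continuous_cdf_of_noAtoms m
  let F : ℝ → I := fun x ↦ ⟨cdf m x, cdf_nonneg m x, cdf_le_one m x⟩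
  have hFc : Continuous F := hc.subtype_mk _
  have hIVT : ∀ s : ℝ, 0 < s → s < 1 → ∃ x, cdf m x = s := by
    intro s hs0 hs1
    obtain ⟨a, ha⟩ := ((tendsto_cdf_atBot m).eventually (gt_mem_nhds hs0)).exists
    obtain ⟨b, hb⟩ := ((tendsto_cdf_atTop m).eventually (lt_mem_nhds hs1)).exists
    obtain ⟨x, hx⟩ := mem_range_of_exists_le_of_exists_ge hc ⟨a, ha.le⟩ ⟨b, hb.le⟩
    exact ⟨x, hx⟩
  refine ⟨F, hFc.measurable, ?_⟩
  have : IsProbabilityMeasure (m.map F) := Measure.isProbabilityMeasure_map hFc.measurable.aemeasurable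
  refine Measure.ext_of_Iic _ _ fun t ↦ ?_
  rw [Measure.map_apply hFc.measurable measurableSet_Iic, unitInterval.volume_Iic]
  have hpre : F ⁻¹' Set.Iic t = {x | cdf m x ≤ t} := by ext x; rfl
  rw [hpre]
  apply le_antisymm
  · have key : ∀ s : ℝ, (t : ℝ) < s → m {x | cdf m x ≤ t} ≤ ENNReal.ofReal s := by
      intro s hs
      by_cases h1 : 1 ≤ s
      · exact prob_le_one.trans (by rwa [ENNReal.one_le_ofReal])
      obtain ⟨x, hx⟩ := hIVT s (t.2.1.trans_lt hs) (not_le.1 h1)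
      calc m {x | cdf m x ≤ t} ≤ m (Set.Iic x) := by
            refine measure_mono fun y hy ↦ ?_
            by_contra hxy
            have := (monotone_cdf m) (not_le.1 hxy).le
            have hy' : cdf m y ≤ t := hy
            linarith
        _ = ENNReal.ofReal s := by rw [← ofReal_cdf, hx]
    have hT : Tendsto (fun s : ℝ ↦ ENNReal.ofReal s) (𝓝[>] (t : ℝ)) (𝓝 (ENNReal.ofReal t)) :=
      (ENNReal.continuous_ofReal.tendsto _).mono_left nhdsWithin_le_nhds
    exact ge_of_tendsto hT (eventually_nhdsWithin_of_forall key)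
  · rcases t.2.1.eq_or_lt with h0 | h0
    · rw [← h0]; simp
    rcases t.2.2.eq_or_lt with h1 | h1
    · have : {x | cdf m x ≤ t} = Set.univ := by
        ext x; simp [h1, cdf_le_one]
      rw [this, measure_univ, h1]; simp
    obtain ⟨x, hx⟩ := hIVT t h0 h1
    rw [← hx, ofReal_cdf]
    exact measure_mono fun y hy ↦ monotone_cdf m hy

/-- An atomless finite measure can be transported by a measurable map onto any law, up to the
total mass: the uniform law on `[0,1]` serves as intermediate step. -/
theorem exists_measurable_map_eq_smul {X W : Type*} [MeasurableSpace X] [StandardBorelSpace X]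
    [MeasurableSpace W] [StandardBorelSpace W] [Nonempty W] (m : Measure X) [IsFiniteMeasure m]
    [NullSingletonClass m] (Q : Measure W) [IsProbabilityMeasure Q] :
    ∃ T : X → W, Measurable T ∧ m.map T = m Set.univ • Q := by
  by_cases hm : m = 0
  · exact ⟨fun _ ↦ Classical.arbitrary W, measurable_const, by simp [hm]⟩
  have hm0 : m Set.univ ≠ 0 := by simpa using hm
  have he := measurableEmbedding_embeddingReal X
  let m' : Measure ℝ := ((m Set.univ)⁻¹ • m).map (embeddingReal X)
  have hm'p : IsProbabilityMeasure m' := by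
    constructor
    rw [Measure.map_apply he.measurable MeasurableSet.univ]
    simp [ENNReal.inv_mul_cancel hm0 (measure_ne_top m _)]
  have hm'a : NullSingletonClass m' := by
    constructor
    intro a
    rw [Measure.map_apply he.measurable (measurableSet_singleton a)]
    have hs : (embeddingReal X ⁻¹' {a}).Subsingleton :=
      Set.subsingleton_singleton.preimage he.injective
    simp [hs.measure_zero m]
  obtain ⟨F, hF, hFm⟩ := exists_measurable_map_eq_volume_unitInterval m'
  obtain ⟨G, hG, hGQ⟩ := Measure.exists_measurable_map_eq Q
  refine ⟨G ∘ F ∘ embeddingReal X, hG.comp (hF.comp he.measurable), ?_⟩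
  have h1 : m'.map F = (m Set.univ)⁻¹ • m.map (F ∘ embeddingReal X) := by
    rw [Measure.map_map hF he.measurable, Measure.map_smul]
  have h2 : m.map (F ∘ embeddingReal X) = m Set.univ • (volume : Measure I) := by
    rw [← hFm, h1, smul_smul, ENNReal.mul_inv_cancel hm0 (measure_ne_top m _), one_smul]
  rw [← Measure.map_map hG (hF.comp he.measurable), h2, Measure.map_smul, hGQ]

end Transport

/-! ### Barycenters -/

section Barycenter

open Filter Topology

variable {Y : Type*} [MeasurableSpace Y]

theorem isProbabilityMeasure_bind_coe (Q : Measure (ProbabilityMeasure Y))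
    [IsProbabilityMeasure Q] :
    IsProbabilityMeasure (Q.bind fun p ↦ (p : Measure Y)) := by
  constructor
  rw [Measure.bind_apply MeasurableSet.univ measurable_coe_probabilityMeasure.aemeasurable]
  simp

/-- The barycenter `∫ p Q(dp)` of a law `Q` on `𝒫(Y)`. -/
def bary (Q : Measure (ProbabilityMeasure Y)) [IsProbabilityMeasure Q] : ProbabilityMeasure Y :=
  ⟨Q.bind fun p ↦ (p : Measure Y), isProbabilityMeasure_bind_coe Q⟩

theorem bary_apply (Q : Measure (ProbabilityMeasure Y)) [IsProbabilityMeasure Q] {s : Set Y}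
    (hs : MeasurableSet s) : (bary Q : Measure Y) s = ∫⁻ p, (p : Measure Y) s ∂Q :=
  Measure.bind_apply hs measurable_coe_probabilityMeasure.aemeasurable

theorem lintegral_bary (Q : Measure (ProbabilityMeasure Y)) [IsProbabilityMeasure Q]
    {φ : Y → ℝ≥0∞} (hφ : Measurable φ) :
    ∫⁻ y, φ y ∂(bary Q : Measure Y) = ∫⁻ p, ∫⁻ y, φ y ∂(p : Measure Y) ∂Q :=
  Measure.lintegral_bind measurable_coe_probabilityMeasure.aemeasurable hφ.aemeasurable

/-- Closedness under two-point convex combinations gives closedness under barycenters of finitely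
supported laws. -/
theorem bary_map_simpleFunc_mem {Ω : Type*} [MeasurableSpace Ω] {C : Set (ProbabilityMeasure Y)}
    (hC : ∀ p₁ ∈ C, ∀ p₂ ∈ C, ∀ (p : ProbabilityMeasure Y) (t : ℝ), 0 ≤ t → t ≤ 1 →
      (p : Measure Y) = ENNReal.ofReal t • (p₁ : Measure Y)
        + ENNReal.ofReal (1 - t) • (p₂ : Measure Y) → p ∈ C)
    (P : Measure Ω) [IsProbabilityMeasure P] (r : SimpleFunc Ω (ProbabilityMeasure Y))
    (hr : ∀ ω, r ω ∈ C) (hm : IsProbabilityMeasure (P.map r)) : bary (P.map r) ∈ C := by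
  -- Probability measures do not form a vector space, so convexity is transported to real-valued
  -- functions of measurable sets.
  let Φ : ProbabilityMeasure Y → ({s : Set Y // MeasurableSet s} → ℝ) :=
    fun p s ↦ (p : Measure Y).real s
  have hinj : ∀ p q, Φ p = Φ q → p = q := by
    intro p q h
    apply Subtype.ext
    refine Measure.ext fun s hs ↦ ?_
    have : (p : Measure Y).real s = (q : Measure Y).real s := congrFun h ⟨s, hs⟩
    exact (measureReal_eq_measureReal_iff (measure_ne_top (p : Measure Y) s)
      (measure_ne_top (q : Measure Y) s)).1 this
  have hconv : Convex ℝ (Φ '' C) := by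
    rintro _ ⟨p₁, h₁, rfl⟩ _ ⟨p₂, h₂, rfl⟩ a b ha hb hab
    have hab' : ENNReal.ofReal a + ENNReal.ofReal (1 - a) = 1 := by
      rw [← ENNReal.ofReal_add ha (by linarith)]; simp
    have hp : IsProbabilityMeasure (ENNReal.ofReal a • (p₁ : Measure Y)
        + ENNReal.ofReal (1 - a) • (p₂ : Measure Y)) := by
      constructor
      simp [hab']
    refine ⟨⟨_, hp⟩, hC p₁ h₁ p₂ h₂ _ a ha (by linarith) rfl, ?_⟩
    obtain rfl : b = 1 - a := by linarith
    ext s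
    simp only [Φ, ProbabilityMeasure.coe_mk, Pi.add_apply, Pi.smul_apply, smul_eq_mul]
    have h₁' : (ENNReal.ofReal a • (p₁ : Measure Y)) s ≠ ∞ :=
      ENNReal.mul_ne_top ENNReal.ofReal_ne_top (measure_ne_top _ _)
    have h₂' : (ENNReal.ofReal (1 - a) • (p₂ : Measure Y)) s ≠ ∞ :=
      ENNReal.mul_ne_top ENNReal.ofReal_ne_top (measure_ne_top _ _)
    rw [measureReal_add_apply h₁' h₂', measureReal_ennreal_smul_apply, measureReal_ennreal_smul_apply,
      ENNReal.toReal_ofReal ha, ENNReal.toReal_ofReal hb]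
  have hsum : ∑ p ∈ r.range, P.real (r ⁻¹' {p}) • Φ p ∈ Φ '' C := by
    refine hconv.sum_mem (fun _ _ ↦ measureReal_nonneg) ?_ ?_
    · have := sum_measureReal_preimage_singleton (μ := P) r.range (f := r)
        (fun y _ ↦ r.measurableSet_fiber y)
      rw [this]
      have : (r ⁻¹' (r.range : Set (ProbabilityMeasure Y))) = Set.univ := by
        ext ω; simp
      rw [this]; simp
    · intro p hp
      obtain ⟨ω, rfl⟩ := SimpleFunc.mem_range.1 hp
      exact ⟨_, hr ω, rfl⟩
  obtain ⟨q, hq, hqe⟩ := hsum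
  convert hq
  apply hinj
  rw [hqe]
  ext s
  have h1 : (bary (P.map r) : Measure Y) s = ∑ p ∈ r.range, (p : Measure Y) s * P (r ⁻¹' {p}) := by
    rw [bary_apply _ s.2, lintegral_map (measurable_apply_probabilityMeasure s.2) r.measurable]
    have : ∀ ω, ((r ω : ProbabilityMeasure Y) : Measure Y) s
        = (r.map fun p : ProbabilityMeasure Y ↦ (p : Measure Y) s) ω := fun ω ↦ rfl
    simp_rw [this]
    rw [SimpleFunc.lintegral_eq_lintegral, SimpleFunc.map_lintegral]
  simp only [Φ, Finset.sum_apply, Pi.smul_apply, smul_eq_mul, measureReal_def, h1]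
  rw [ENNReal.toReal_sum (fun p _ ↦ ENNReal.mul_ne_top (measure_ne_top _ _) (measure_ne_top _ _))]
  refine Finset.sum_congr rfl fun p _ ↦ ?_
  rw [ENNReal.toReal_mul, mul_comm]

/-- A closed convex set of probability measures contains the barycenter of any law carried by it,
by approximation with finitely supported laws. -/
theorem bary_mem_of_isClosed [TopologicalSpace Y] [PolishSpace Y] [BorelSpace Y]
    {C : Set (ProbabilityMeasure Y)} (hCc : IsClosed C)
    (hC : ∀ p₁ ∈ C, ∀ p₂ ∈ C, ∀ (p : ProbabilityMeasure Y) (t : ℝ), 0 ≤ t → t ≤ 1 →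
      (p : Measure Y) = ENNReal.ofReal t • (p₁ : Measure Y)
        + ENNReal.ofReal (1 - t) • (p₂ : Measure Y) → p ∈ C)
    (Q : Measure (ProbabilityMeasure Y)) [IsProbabilityMeasure Q] (hQ : ∀ᵐ p ∂Q, p ∈ C) :
    bary Q ∈ C := by
  let _ : MetricSpace (ProbabilityMeasure Y) := TopologicalSpace.metrizableSpaceMetric _
  obtain ⟨p₀, hp₀⟩ := hQ.exists
  let r : ℕ → SimpleFunc (ProbabilityMeasure Y) (ProbabilityMeasure Y) :=
    SimpleFunc.approxOn id measurable_id C p₀ hp₀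
  have hm : ∀ n, IsProbabilityMeasure (Q.map (r n)) := fun n ↦
    Measure.isProbabilityMeasure_map (r n).measurable.aemeasurable
  have hmem : ∀ n, bary (Q.map (r n)) ∈ C := fun n ↦
    bary_map_simpleFunc_mem hC Q (r n) (fun p ↦ SimpleFunc.approxOn_mem _ hp₀ n p) (hm n)
  refine hCc.mem_of_tendsto (b := atTop) (f := fun n ↦ bary (Q.map (r n))) ?_
    (Eventually.of_forall hmem)
  rw [ProbabilityMeasure.tendsto_iff_forall_lintegral_tendsto]
  intro φ
  have hφ : Measurable fun y ↦ (φ y : ℝ≥0∞) := φ.continuous.measurable.coe_nnreal_ennreal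
  have hφ' := measurable_lintegral_probabilityMeasure hφ
  rw [lintegral_bary _ hφ]
  have : ∀ n, ∫⁻ y, φ y ∂(bary (Q.map (r n)) : Measure Y)
      = ∫⁻ p, ∫⁻ y, φ y ∂(r n p : Measure Y) ∂Q := fun n ↦ by
    rw [lintegral_bary _ hφ, lintegral_map hφ' (r n).measurable]
  simp_rw [this]
  refine tendsto_lintegral_of_dominated_convergence (fun _ ↦ (nndist 0 φ : ℝ≥0∞))
    (fun n ↦ hφ'.comp (r n).measurable) (fun n ↦ ae_of_all _ fun p ↦ ?_) (by simp) ?_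
  · refine (lintegral_mono (g := fun _ ↦ (nndist 0 φ : ℝ≥0∞)) fun y ↦ ?_).trans (by simp)
    exact ENNReal.coe_le_coe.2 (φ.apply_le_nndist_zero y)
  · filter_upwards [hQ] with p hp
    have h1 : Tendsto (fun n ↦ r n p) atTop (𝓝 p) :=
      SimpleFunc.tendsto_approxOn measurable_id hp₀ (subset_closure hp)
    exact ((ProbabilityMeasure.continuous_lintegral_boundedContinuousFunction φ).tendsto p).comp h1

end Barycenter

/-! ### Multivaluedness of two-point monotone sets -/

section Dimension

open Filter Topology

variable {E : Type*} [NormedAddCommGroup E] [InnerProductSpace ℝ E]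

/-- The derivative of a strictly convex function is injective. -/
theorem fderiv_ne_of_strictConvexOn {Ψ : E → ℝ} (hΨ : StrictConvexOn ℝ Set.univ Ψ)
    (hd : Differentiable ℝ Ψ) {u v : E} (huv : u ≠ v) : fderiv ℝ Ψ u - fderiv ℝ Ψ v ≠ 0 := by
  intro h
  have h : fderiv ℝ Ψ u = fderiv ℝ Ψ v := sub_eq_zero.1 h
  let ℓ : ℝ →ᵃ[ℝ] E := AffineMap.lineMap u v
  have hℓ : ∀ t, ℓ t = u + t • (v - u) := fun t ↦ by
    simp [ℓ, AffineMap.lineMap_apply, add_comm]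
  have hinj : Function.Injective ℓ := AffineMap.lineMap_injective ℝ huv
  have hconv : StrictConvexOn ℝ Set.univ (Ψ ∘ ℓ) := by
    refine ⟨convex_univ, fun x _ y _ hxy a b ha hb hab ↦ ?_⟩
    have := hΨ.2 (Set.mem_univ (ℓ x)) (Set.mem_univ (ℓ y)) (hinj.ne hxy) ha hb hab
    simp only [Function.comp_apply]
    rwa [Convex.combo_affine_apply hab]
  have hder : ∀ t, HasDerivAt (Ψ ∘ ℓ) (fderiv ℝ Ψ (ℓ t) (v - u)) t := by
    intro t
    have : HasDerivAt ℓ (v - u) t := AffineMap.hasDerivAt_lineMap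
    exact (hd (ℓ t)).hasFDerivAt.comp_hasDerivAt t this
  have hmono := hconv.strictMonoOn_deriv (fun t _ ↦ (hder t).differentiableAt)
  have := hmono (Set.mem_univ (0 : ℝ)) (Set.mem_univ (1 : ℝ)) one_pos
  rw [(hder 0).deriv, (hder 1).deriv] at this
  simp [ℓ, h] at this

/-- A vector making a large enough angle with the line `ℝ w` is controlled by its projection on the
hyperplane orthogonal to `w`. -/
theorem norm_le_two_mul_of_cone {w x : E} (hw : w ≠ 0)
    (h : 2 * |inner ℝ w x| ≤ ‖w‖ * ‖x‖) :
    ‖x‖ ≤ 2 * ‖(ℝ ∙ w)ᗮ.orthogonalProjectionOnto x‖ := by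
  have h1 := Submodule.norm_sq_eq_add_norm_sq_projection x (ℝ ∙ w)
  have hw' : 0 < ‖w‖ := norm_pos_iff.2 hw
  have h2 : ‖(ℝ ∙ w).orthogonalProjectionOnto x‖ ≤ ‖x‖ / 2 := by
    change ‖(ℝ ∙ w).starProjection x‖ ≤ ‖x‖ / 2
    rw [Submodule.starProjection_singleton, norm_smul, norm_div]
    simp only [RCLike.ofReal_real_eq_id, id_eq, Real.norm_eq_abs, abs_pow, abs_norm]
    field_simp
    nlinarith
  nlinarith [norm_nonneg ((ℝ ∙ w)ᗮ.orthogonalProjectionOnto x), norm_nonneg x,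
    norm_nonneg ((ℝ ∙ w).orthogonalProjectionOnto x)]

variable [FiniteDimensional ℝ E]

/-- Near `(a, b, b')` with `b ≠ b'`, two triples for which neither exchange of a first partner with
a second partner decreases the cost have first coordinates satisfying a cone condition: to first
order, `∇Ψ(b - a) - ∇Ψ(b' - a)`, which is nonzero by strict convexity, is orthogonal to the
difference of the first coordinates. -/
theorem exists_nhds_cone {Ψ : E → ℝ} (hΨ : StrictConvexOn ℝ Set.univ Ψ)
    (hd : ContDiff ℝ 1 Ψ) (a b b' : E) (hb : b ≠ b') :
    ∃ w : E, w ≠ 0 ∧ ∃ U ∈ 𝓝 (a, b, b'), ∀ z₁ ∈ U, ∀ z₂ ∈ U,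
      Ψ (z₁.2.1 - z₁.1) + Ψ (z₂.2.2 - z₂.1) ≤ Ψ (z₁.2.1 - z₂.1) + Ψ (z₂.2.2 - z₁.1) →
      Ψ (z₂.2.1 - z₂.1) + Ψ (z₁.2.2 - z₁.1) ≤ Ψ (z₂.2.1 - z₁.1) + Ψ (z₁.2.2 - z₂.1) →
      2 * |inner ℝ w (z₁.1 - z₂.1)| ≤ ‖w‖ * ‖z₁.1 - z₂.1‖ := by
  set L := fderiv ℝ Ψ (b - a) with hL
  set L' := fderiv ℝ Ψ (b' - a) with hL'
  have hLL : L - L' ≠ 0 := fderiv_ne_of_strictConvexOn hΨ (hd.differentiable one_ne_zero)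
    fun h ↦ hb (sub_left_injective h)
  set w := (InnerProductSpace.toDual ℝ E).symm (L - L') with hw
  have hwi : ∀ x, inner ℝ w x = L x - L' x := fun x ↦ by
    rw [hw, InnerProductSpace.toDual_symm_apply]; rfl
  have hw0 : w ≠ 0 := by rwa [hw, Ne, LinearIsometryEquiv.map_eq_zero_iff]
  refine ⟨w, hw0, ?_⟩
  have hε : 0 < ‖w‖ / 4 := by positivity
  have hs : HasStrictFDerivAt Ψ L (b - a) := hd.contDiffAt.hasStrictFDerivAt one_ne_zero
  have hs' : HasStrictFDerivAt Ψ L' (b' - a) := hd.contDiffAt.hasStrictFDerivAt one_ne_zero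
  have h1 := hs.isLittleO.def hε
  have h2 := hs'.isLittleO.def hε
  rw [nhds_prod_eq] at h1 h2
  obtain ⟨V, hV, hVP⟩ := eventually_prod_self_iff
    (r := fun x y ↦ ‖Ψ x - Ψ y - L (x - y)‖ ≤ ‖w‖ / 4 * ‖x - y‖).1 h1
  obtain ⟨V', hV', hVP'⟩ := eventually_prod_self_iff
    (r := fun x y ↦ ‖Ψ x - Ψ y - L' (x - y)‖ ≤ ‖w‖ / 4 * ‖x - y‖).1 h2
  obtain ⟨r, hr, hrV⟩ := Metric.mem_nhds_iff.1 hV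
  obtain ⟨r', hr', hrV'⟩ := Metric.mem_nhds_iff.1 hV'
  have hρ : 0 < min r r' / 2 := by positivity
  refine ⟨Metric.ball (a, b, b') (min r r' / 2), Metric.ball_mem_nhds _ hρ, ?_⟩
  rintro ⟨a₁, b₁, c₁⟩ hz₁ ⟨a₂, b₂, c₂⟩ hz₂ h12 h21
  rw [Metric.mem_ball, Prod.dist_eq, Prod.dist_eq, max_lt_iff, max_lt_iff, dist_eq_norm,
    dist_eq_norm, dist_eq_norm] at hz₁ hz₂
  simp only at h12 h21 ⊢
  have hmem : ∀ x y : E, ‖x - a‖ < min r r' / 2 → ‖y - b‖ < min r r' / 2 → y - x ∈ V := by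
    intro x y hx hy
    apply hrV
    rw [Metric.mem_ball, dist_eq_norm]
    calc ‖y - x - (b - a)‖ = ‖(y - b) - (x - a)‖ := by congr 1; abel
      _ ≤ ‖y - b‖ + ‖x - a‖ := norm_sub_le _ _
      _ < r := by linarith [min_le_left r r']
  have hmem' : ∀ x y : E, ‖x - a‖ < min r r' / 2 → ‖y - b'‖ < min r r' / 2 → y - x ∈ V' := by
    intro x y hx hy
    apply hrV'
    rw [Metric.mem_ball, dist_eq_norm]
    calc ‖y - x - (b' - a)‖ = ‖(y - b') - (x - a)‖ := by congr 1; abel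
      _ ≤ ‖y - b'‖ + ‖x - a‖ := norm_sub_le _ _
      _ < r' := by linarith [min_le_right r r']
  obtain ⟨ha₁, hb₁, hc₁⟩ := hz₁
  obtain ⟨ha₂, hb₂, hc₂⟩ := hz₂
  have e : ∀ y : E, y - a₂ - (y - a₁) = a₁ - a₂ := fun y ↦ by abel
  have k1 := hVP _ (hmem a₂ b₁ ha₂ hb₁) _ (hmem a₁ b₁ ha₁ hb₁)
  have k2 := hVP _ (hmem a₂ b₂ ha₂ hb₂) _ (hmem a₁ b₂ ha₁ hb₂)
  have k3 := hVP' _ (hmem' a₂ c₁ ha₂ hc₁) _ (hmem' a₁ c₁ ha₁ hc₁)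
  have k4 := hVP' _ (hmem' a₂ c₂ ha₂ hc₂) _ (hmem' a₁ c₂ ha₁ hc₂)
  simp only [e, Real.norm_eq_abs] at k1 k2 k3 k4
  rw [hwi]
  have k1 := abs_le.1 k1
  have k2 := abs_le.1 k2
  have k3 := abs_le.1 k3
  have k4 := abs_le.1 k4
  have : |L (a₁ - a₂) - L' (a₁ - a₂)| ≤ ‖w‖ * ‖a₁ - a₂‖ / 2 := by
    rw [abs_le]
    constructor <;> linarith
  linarith

/-- A set satisfying a cone condition is a Lipschitz graph over a subset of a hyperplane. On the
line, such a graph has at most one point. -/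
theorem dimH_le_of_cone {w : E} (hw : w ≠ 0) {A : Set E}
    (hA : ∀ x ∈ A, ∀ y ∈ A, 2 * |inner ℝ w (x - y)| ≤ ‖w‖ * ‖x - y‖) :
    dimH A ≤ (Module.finrank ℝ E : ℝ≥0∞) - 1 ∧
      (Module.finrank ℝ E = 1 → A.Subsingleton) := by
  have hfr : 1 + Module.finrank ℝ (ℝ ∙ w)ᗮ = Module.finrank ℝ E := by
    rw [← finrank_span_singleton (K := ℝ) hw]
    exact Submodule.finrank_add_finrank_orthogonal _
  let P : A → (ℝ ∙ w)ᗮ := fun x ↦ (ℝ ∙ w)ᗮ.orthogonalProjectionOnto (x : E)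
  have hP : AntilipschitzWith 2 P := by
    refine AntilipschitzWith.of_le_mul_dist fun x y ↦ ?_
    rw [Subtype.dist_eq, dist_eq_norm, dist_eq_norm]
    have := norm_le_two_mul_of_cone hw (hA x x.2 y y.2)
    rwa [map_sub] at this
  constructor
  · have h1 : dimH (Set.univ : Set A) = dimH A := by
      rw [← isometry_subtype_coe.dimH_image (Set.univ : Set A)]; simp
    rw [← h1]
    refine (hP.le_dimH_image _).trans ((dimH_mono (Set.subset_univ _)).trans ?_)
    rw [Real.dimH_univ_eq_finrank, ← hfr]
    simp
  · intro h x hx y hy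
    have hz : Module.finrank ℝ (ℝ ∙ w)ᗮ = 0 := by omega
    have : Subsingleton (ℝ ∙ w)ᗮ := Module.finrank_zero_iff.1 hz
    exact congrArg Subtype.val (hP.injective (Subsingleton.elim (P ⟨x, hx⟩) (P ⟨y, hy⟩)))

/-- If exchanging the partners of two points of `M` never decreases the cost, the set of points of
the first projection of `M` with several partners is small: of dimension at most `dim E - 1`, and countable on the line. -/
theorem dimH_multivalued_le {Ψ : E → ℝ} (hΨ : StrictConvexOn ℝ Set.univ Ψ)
    (hd : ContDiff ℝ 1 Ψ) (M : Set (E × E))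
    (hM : ∀ z₁ ∈ M, ∀ z₂ ∈ M,
      Ψ (z₁.2 - z₁.1) + Ψ (z₂.2 - z₂.1) ≤ Ψ (z₁.2 - z₂.1) + Ψ (z₂.2 - z₁.1)) :
    dimH {a | ∃ b b', b ≠ b' ∧ (a, b) ∈ M ∧ (a, b') ∈ M} ≤ (Module.finrank ℝ E : ℝ≥0∞) - 1 ∧
      (Module.finrank ℝ E = 1 → {a | ∃ b b', b ≠ b' ∧ (a, b) ∈ M ∧ (a, b') ∈ M}.Countable) := by
  -- Triples `(a, b, b')` rather than points `a` are covered by countably many neighbourhoods, since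
  -- the cone depends on the two partners.
  let Tr : Set (E × E × E) := {z | z.2.1 ≠ z.2.2 ∧ (z.1, z.2.1) ∈ M ∧ (z.1, z.2.2) ∈ M}
  have hloc : ∀ z : E × E × E, ∃ w : E, ∃ U : Set (E × E × E), z ∈ Tr → w ≠ 0 ∧ U ∈ 𝓝 z ∧
      ∀ z₁ ∈ Tr ∩ U, ∀ z₂ ∈ Tr ∩ U,
        2 * |inner ℝ w (z₁.1 - z₂.1)| ≤ ‖w‖ * ‖z₁.1 - z₂.1‖ := by
    intro z
    by_cases hz : z ∈ Tr
    · obtain ⟨w, hw, U, hU, h⟩ := exists_nhds_cone hΨ hd z.1 z.2.1 z.2.2 hz.1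
      refine ⟨w, U, fun _ ↦ ⟨hw, hU, fun z₁ h₁ z₂ h₂ ↦ h z₁ h₁.2 z₂ h₂.2 ?_ ?_⟩⟩
      · exact hM _ h₁.1.2.1 _ h₂.1.2.2
      · exact hM _ h₂.1.2.1 _ h₁.1.2.2
    · exact ⟨0, ∅, fun h ↦ absurd h hz⟩
  choose w U hwU using hloc
  obtain ⟨t, htT, htc, hcov⟩ := TopologicalSpace.countable_cover_nhdsWithin (f := U) (s := Tr)
    fun z hz ↦ mem_nhdsWithin_of_mem_nhds (hwU z hz).2.1
  have hsub : {a | ∃ b b', b ≠ b' ∧ (a, b) ∈ M ∧ (a, b') ∈ M}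
      ⊆ ⋃ z ∈ t, Prod.fst '' (Tr ∩ U z) := by
    rintro a ⟨b, b', hne, hb, hb'⟩
    have hz : (a, b, b') ∈ Tr := ⟨hne, hb, hb'⟩
    obtain ⟨z, hzt, hzU⟩ := Set.mem_iUnion₂.1 (hcov hz)
    exact Set.mem_iUnion₂.2 ⟨z, hzt, _, ⟨hz, hzU⟩, rfl⟩
  have hcone : ∀ z ∈ t, dimH (Prod.fst '' (Tr ∩ U z)) ≤ (Module.finrank ℝ E : ℝ≥0∞) - 1 ∧
      (Module.finrank ℝ E = 1 → (Prod.fst '' (Tr ∩ U z)).Subsingleton) := by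
    intro z hz
    obtain ⟨h1, -, h2⟩ := hwU z (htT hz)
    refine dimH_le_of_cone h1 ?_
    rintro _ ⟨z₁, hz₁, rfl⟩ _ ⟨z₂, hz₂, rfl⟩
    exact h2 z₁ hz₁ z₂ hz₂
  constructor
  · refine (dimH_mono hsub).trans ?_
    rw [dimH_bUnion htc]
    exact iSup₂_le fun z hz ↦ (hcone z hz).1
  · intro h1
    exact (htc.biUnion fun z hz ↦ ((hcone z hz).2 h1).countable).mono hsub

end Dimension

/-! ### The relaxed problem -/

section Relaxed

open Filter Topology BoundedContinuousFunction

variable {E Y : Type*} [MeasurableSpace E] [MeasurableSpace Y]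

/-- Couplings of `ρ` with a law on `𝒫(Y)` whose barycenter is `ν`: the relaxation of `Π(μ, ν)`
in which the conditional measures `σ^x` are allowed to be random. -/
def relaxed (ρ : Measure E) (ν : Measure Y) : Set (ProbabilityMeasure (E × ProbabilityMeasure Y)) :=
  {γ | (γ : Measure (E × ProbabilityMeasure Y)).map Prod.fst = ρ ∧
    ∀ s, MeasurableSet s → ∫⁻ z, (z.2 : Measure Y) s ∂(γ : Measure (E × ProbabilityMeasure Y)) = ν s}

/-- The relaxed cost `∫ c dγ`, with values in `[0, ∞]`; `c` is meant to be nonnegative, its negative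
part being discarded. -/
def relaxedCost (c : E × ProbabilityMeasure Y → ℝ)
    (γ : ProbabilityMeasure (E × ProbabilityMeasure Y)) : ℝ≥0∞ :=
  ∫⁻ z, ENNReal.ofReal (c z) ∂(γ : Measure (E × ProbabilityMeasure Y))

variable [TopologicalSpace E] [BorelSpace E]
  [TopologicalSpace Y] [PolishSpace Y] [BorelSpace Y]

theorem lowerSemicontinuous_relaxedCost {c : E × ProbabilityMeasure Y → ℝ} (hc : Continuous c) :
    LowerSemicontinuous (relaxedCost c) := by
  -- The cost is the supremum of the bounded continuous truncations `min c n`.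
  let Φ : ℕ → E × ProbabilityMeasure Y →ᵇ NNReal := fun n ↦ BoundedContinuousFunction.mkOfBound
    ⟨fun z ↦ min (c z).toNNReal n, (continuous_real_toNNReal.comp hc).min continuous_const⟩ n
    (fun z z' ↦ by
      have ha : ((min (c z).toNNReal n : NNReal) : ℝ) ≤ n := by
        exact_mod_cast min_le_right (c z).toNNReal (n : NNReal)
      have hb : ((min (c z').toNNReal n : NNReal) : ℝ) ≤ n := by
        exact_mod_cast min_le_right (c z').toNNReal (n : NNReal)
      have ha' := (min (c z).toNNReal (n : NNReal)).coe_nonneg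
      have hb' := (min (c z').toNNReal (n : NNReal)).coe_nonneg
      rw [NNReal.dist_eq, abs_le]
      simp only [ContinuousMap.coe_mk]
      constructor <;> linarith)
  have hΦ : relaxedCost c = fun γ : ProbabilityMeasure (E × ProbabilityMeasure Y) ↦
      ⨆ n, ∫⁻ z, Φ n z ∂(γ : Measure (E × ProbabilityMeasure Y)) := by
    ext γ
    rw [← lintegral_iSup (fun n ↦ (Φ n).continuous.measurable.coe_nnreal_ennreal)]
    · refine lintegral_congr fun z ↦ ?_
      apply le_antisymm
      · obtain ⟨n, hn⟩ := exists_nat_ge (c z).toNNReal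
        refine le_iSup_of_le n ?_
        change ((c z).toNNReal : ℝ≥0∞) ≤ (min (c z).toNNReal n : NNReal)
        rw [min_eq_left hn]
      · exact iSup_le fun n ↦ ENNReal.coe_le_coe.2 (min_le_left _ _)
    · intro n m hnm z
      exact ENNReal.coe_le_coe.2 (min_le_min_left _ (by exact_mod_cast hnm))
  rw [hΦ]
  exact lowerSemicontinuous_iSup fun n ↦
    (ProbabilityMeasure.continuous_lintegral_boundedContinuousFunction (Φ n)).lowerSemicontinuous

variable [PolishSpace E]

/-- Laws on `𝒫(Y)` with a given barycenter form a tight family: by Markov's inequality each of them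
is nearly carried by a fixed uniformly tight, hence relatively compact, set of measures. -/
theorem isTight_of_barycenter (ν : Measure Y) [IsFiniteMeasure ν]
    (S : Set (Measure (ProbabilityMeasure Y)))
    (hS : ∀ Q ∈ S, ∀ s, MeasurableSet s → ∫⁻ p, (p : Measure Y) s ∂Q = ν s) :
    IsTightMeasureSet S := by
  rw [isTightMeasureSet_iff_exists_isCompact_measure_compl_le]
  intro ε hε
  obtain ⟨δ, hδ, hδε⟩ := ENNReal.exists_pos_sum_of_countable hε.ne' ℕ
  let u : ℕ → NNReal := fun n ↦ (1 / 2) ^ n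
  have hu0 : ∀ n, 0 < u n := fun n ↦ by positivity
  have hu : Tendsto u atTop (𝓝 0) :=
    tendsto_pow_atTop_nhds_zero_of_lt_one (by simp) (by
      rw [← NNReal.coe_lt_coe]; norm_num)
  have hν : IsTightMeasureSet {ν} := by
    exact isTightMeasureSet_singleton
  have hK : ∀ n, ∃ K : Set Y, IsCompact K ∧ ν Kᶜ ≤ δ n * u n := fun n ↦ by
    obtain ⟨K, hK, h⟩ := isTightMeasureSet_iff_exists_isCompact_measure_compl_le.1 hν (δ n * u n)
      (ENNReal.mul_pos (by simpa using (hδ n).ne') (by simpa using (hu0 n).ne'))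
    exact ⟨K, hK, h ν rfl⟩
  choose K hKc hKν using hK
  let _ := TopologicalSpace.upgradeIsCompletelyMetrizable Y
  refine ⟨_, isCompact_setOfPred_probabilityMeasure_mass_eq_compl_isCompact_le hu hKc
    (Or.inl inferInstance), fun Q hQ ↦ ?_⟩
  have hsub : {p : ProbabilityMeasure Y | ∀ n, p (K n)ᶜ ≤ u n}ᶜ
      ⊆ ⋃ n, {p : ProbabilityMeasure Y | (u n : ℝ≥0∞) ≤ (p : Measure Y) (K n)ᶜ} := by
    intro p hp
    simp only [Set.mem_compl_iff, Set.mem_ofPred_eq, not_forall, not_le] at hp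
    obtain ⟨n, hn⟩ := hp
    refine Set.mem_iUnion.2 ⟨n, ?_⟩
    rw [Set.mem_ofPred_eq, ← ProbabilityMeasure.ennreal_coeFn_eq_coeFn_toMeasure]
    exact_mod_cast hn.le
  calc Q _ ≤ Q (⋃ n, {p : ProbabilityMeasure Y | (u n : ℝ≥0∞) ≤ (p : Measure Y) (K n)ᶜ}) :=
        measure_mono hsub
    _ ≤ ∑' n, Q {p : ProbabilityMeasure Y | (u n : ℝ≥0∞) ≤ (p : Measure Y) (K n)ᶜ} :=
        measure_iUnion_le _
    _ ≤ ∑' n, (δ n : ℝ≥0∞) := by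
        refine ENNReal.tsum_le_tsum fun n ↦ ?_
        have hm := (hKc n).isClosed.measurableSet.compl
        have h1 := meas_ge_le_lintegral_div (μ := Q)
          (measurable_apply_probabilityMeasure hm).aemeasurable
          (ε := (u n : ℝ≥0∞)) (by simpa using (hu0 n).ne') (by simp)
        refine h1.trans (ENNReal.div_le_of_le_mul ?_)
        rw [hS Q hQ _ hm]
        exact hKν n
    _ ≤ ε := hδε.le

theorem isClosed_relaxed (ρ : Measure E) (ν : Measure Y) [IsProbabilityMeasure ρ]
    [IsProbabilityMeasure ν] : IsClosed (relaxed ρ ν) := by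
  have h1 : IsClosed {γ : ProbabilityMeasure (E × ProbabilityMeasure Y) |
      γ.map measurable_fst.aemeasurable = (⟨ρ, inferInstance⟩ : ProbabilityMeasure E)} :=
    isClosed_eq (ProbabilityMeasure.continuous_map continuous_fst) continuous_const
  have h2 : ∀ φ : Y →ᵇ NNReal, Continuous fun γ : ProbabilityMeasure (E × ProbabilityMeasure Y) ↦
      ∫⁻ z, ∫⁻ y, φ y ∂(z.2 : Measure Y) ∂(γ : Measure (E × ProbabilityMeasure Y)) := by
    intro φ
    let Φ : E × ProbabilityMeasure Y →ᵇ NNReal := BoundedContinuousFunction.mkOfBound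
      ⟨fun z ↦ z.2.toFiniteMeasure.testAgainstNN φ,
        (FiniteMeasure.continuous_testAgainstNN_eval φ).comp
          (ProbabilityMeasure.toFiniteMeasure_continuous.comp continuous_snd)⟩
      (nndist 0 φ) (fun z z' ↦ by
        have hb : ∀ p : ProbabilityMeasure Y,
            p.toFiniteMeasure.testAgainstNN φ ≤ nndist 0 φ := fun p ↦ by
          rw [← ENNReal.coe_le_coe, FiniteMeasure.testAgainstNN_coe_eq]
          refine (lintegral_mono (g := fun _ ↦ (nndist 0 φ : ℝ≥0∞)) fun y ↦ ?_).trans (by simp)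
          exact ENNReal.coe_le_coe.2 (φ.apply_le_nndist_zero y)
        have ha := hb z.2
        have hc := hb z'.2
        rw [NNReal.dist_eq, abs_le]
        simp only [ContinuousMap.coe_mk]
        rw [← NNReal.coe_le_coe] at ha hc
        have h3 := (z.2.toFiniteMeasure.testAgainstNN φ).2
        have h4 := (z'.2.toFiniteMeasure.testAgainstNN φ).2
        simp only [NNReal.val_eq_coe] at h3 h4
        constructor <;> linarith)
    have := ProbabilityMeasure.continuous_lintegral_boundedContinuousFunction Φ
    convert this using 3
    ext z
    exact (FiniteMeasure.testAgainstNN_coe_eq (μ := z.2.toFiniteMeasure) (f := φ)).symm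
  have h3 : relaxed ρ ν = {γ : ProbabilityMeasure (E × ProbabilityMeasure Y) |
      γ.map measurable_fst.aemeasurable = (⟨ρ, inferInstance⟩ : ProbabilityMeasure E)}
      ∩ ⋂ φ : Y →ᵇ NNReal, {γ | ∫⁻ z, ∫⁻ y, φ y ∂(z.2 : Measure Y)
        ∂(γ : Measure (E × ProbabilityMeasure Y)) = ∫⁻ y, φ y ∂ν} := by
    ext γ
    let Q := (γ : Measure (E × ProbabilityMeasure Y)).map Prod.snd
    have hQ : IsProbabilityMeasure Q :=
      Measure.isProbabilityMeasure_map measurable_snd.aemeasurable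
    have hs : ∀ s, MeasurableSet s → ∫⁻ z, (z.2 : Measure Y) s
        ∂(γ : Measure (E × ProbabilityMeasure Y)) = (bary Q : Measure Y) s := by
      intro s hs
      rw [bary_apply _ hs, lintegral_map (measurable_apply_probabilityMeasure hs) measurable_snd]
    have hφ : ∀ φ : Y →ᵇ NNReal, ∫⁻ z, ∫⁻ y, φ y ∂(z.2 : Measure Y)
        ∂(γ : Measure (E × ProbabilityMeasure Y))
        = ∫⁻ y, φ y ∂(bary Q : Measure Y) := by
      intro φ
      have hm : Measurable fun y ↦ (φ y : ℝ≥0∞) := φ.continuous.measurable.coe_nnreal_ennreal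
      rw [lintegral_bary _ hm, lintegral_map (measurable_lintegral_probabilityMeasure hm)
        measurable_snd]
    simp only [relaxed, Set.mem_ofPred_eq, Set.mem_inter_iff, Set.mem_iInter]
    refine and_congr ⟨fun h ↦ Subtype.ext h, fun h ↦ congrArg Subtype.val h⟩ ?_
    constructor
    · intro h φ
      rw [hφ, show (bary Q : Measure Y) = ν from
        Measure.ext fun s hs' ↦ (hs s hs').symm.trans (h s hs')]
    · intro h s hs'
      rw [hs s hs', ext_of_forall_lintegral_eq_of_IsFiniteMeasure fun φ ↦ (hφ φ).symm.trans (h φ)]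
  rw [h3]
  exact h1.inter (isClosed_iInter fun φ ↦ isClosed_eq (h2 φ) continuous_const)

theorem isCompact_relaxed (ρ : Measure E) (ν : Measure Y) [IsProbabilityMeasure ρ]
    [IsProbabilityMeasure ν] : IsCompact (relaxed ρ ν) := by
  rw [← (isClosed_relaxed ρ ν).closure_eq]
  let _ := TopologicalSpace.upgradeIsCompletelyMetrizable E
  let _ : MetricSpace (ProbabilityMeasure Y) := TopologicalSpace.metrizableSpaceMetric _
  apply isCompact_closure_of_isTightMeasureSet
  apply IsTightMeasureSet.prodMk
  · refine (isTightMeasureSet_singleton (μ := ρ)).subset ?_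
    rintro _ ⟨_, ⟨γ, hγ, rfl⟩, rfl⟩
    exact hγ.1
  · refine isTight_of_barycenter ν _ ?_
    rintro _ ⟨_, ⟨γ, hγ, rfl⟩, rfl⟩ s hs
    rw [Measure.snd, lintegral_map (measurable_apply_probabilityMeasure hs) measurable_snd]
    exact hγ.2 s hs

end Relaxed

/-! ### Monotonicity of relaxed minimizers -/

section Monotonicity

open Filter Topology

variable {E Y : Type*} [MeasurableSpace E] [MeasurableSpace Y]

/-- For a relaxed minimizer of finite cost, almost no pair of independent points has its cost
decreased by exchanging second coordinates: otherwise, the first point of such a pair, once the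
exchange is made for all the bad pairs, has a law which is a better competitor. -/
theorem ae_exchange_of_isMin {ρ : Measure E} {ν : Measure Y}
    {c : E × ProbabilityMeasure Y → ℝ} (hc : Measurable c)
    {γ : ProbabilityMeasure (E × ProbabilityMeasure Y)} (hγ : γ ∈ relaxed ρ ν)
    (hmin : ∀ γ' ∈ relaxed ρ ν, relaxedCost c γ ≤ relaxedCost c γ') (hfin : relaxedCost c γ ≠ ∞) :
    ∀ᵐ w ∂((γ : Measure (E × ProbabilityMeasure Y)).prod (γ : Measure (E × ProbabilityMeasure Y))),
      ENNReal.ofReal (c w.1) + ENNReal.ofReal (c w.2) ≤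
        ENNReal.ofReal (c (w.1.1, w.2.2)) + ENNReal.ofReal (c (w.2.1, w.1.2)) := by
  classical
  set m : Measure (E × ProbabilityMeasure Y) := (γ : Measure (E × ProbabilityMeasure Y)) with hm
  set G := m.prod m with hG
  let k : E × ProbabilityMeasure Y → ℝ≥0∞ := fun z ↦ ENNReal.ofReal (c z)
  have hk : Measurable k := hc.ennreal_ofReal
  let x : (E × ProbabilityMeasure Y) × (E × ProbabilityMeasure Y) → ℝ≥0∞ := fun w ↦ k w.1
  let y : (E × ProbabilityMeasure Y) × (E × ProbabilityMeasure Y) → ℝ≥0∞ :=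
    fun w ↦ k (w.1.1, w.2.2)
  have hx : Measurable x := hk.comp measurable_fst
  have hy : Measurable y := hk.comp (by fun_prop)
  -- The bad pairs form a set invariant under the exchange of the two points.
  let B := {w | y w + y w.swap < x w + x w.swap}
  have hB : MeasurableSet B := measurableSet_lt (hy.add (hy.comp measurable_swap))
    (hx.add (hx.comp measurable_swap))
  have hBs : Prod.swap ⁻¹' B = B := by
    ext w
    simp [B, add_comm]
  have hswap : ∀ F : (E × ProbabilityMeasure Y) × (E × ProbabilityMeasure Y) → ℝ≥0∞, Measurable F →
      ∫⁻ w in B, F w.swap ∂G = ∫⁻ w in B, F w ∂G := by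
    intro F hF
    have := (Measure.measurePreserving_swap (μ := m) (ν := m)).setLIntegral_comp_preimage hB hF
    rwa [hBs] at this
  suffices h0 : G B = 0 by
    have : ∀ᵐ w ∂G, w ∉ B := measure_eq_zero_iff_ae_notMem.1 h0
    filter_upwards [this] with w hw
    exact not_lt.1 hw
  let τ : (E × ProbabilityMeasure Y) × (E × ProbabilityMeasure Y) → E × ProbabilityMeasure Y :=
    fun w ↦ (w.1.1, B.piecewise (fun w ↦ w.2.2) (fun w ↦ w.1.2) w)
  have hτ : Measurable τ := (by fun_prop : Measurable fun w : (E × ProbabilityMeasure Y) ×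
    (E × ProbabilityMeasure Y) ↦ w.1.1).prodMk (Measurable.piecewise hB (by fun_prop) (by fun_prop))
  have hfst : ∀ F : E × ProbabilityMeasure Y → ℝ≥0∞, Measurable F →
      ∫⁻ w, F w.1 ∂G = ∫⁻ z, F z ∂m := by
    intro F hF
    have h1 : G.map Prod.fst = m := Measure.fst_prod
    rw [← h1, lintegral_map hF measurable_fst]
  have hsplit : ∀ F : E × ProbabilityMeasure Y → ℝ≥0∞, Measurable F →
      ∫⁻ z, F z ∂(G.map τ) = ∫⁻ w in B, F (w.1.1, w.2.2) ∂G + ∫⁻ w in Bᶜ, F w.1 ∂G := by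
    intro F hF
    rw [lintegral_map hF hτ, ← lintegral_add_compl _ hB]
    congr 1
    · exact setLIntegral_congr_fun hB fun w hw ↦ by simp [τ, hw]
    · exact setLIntegral_congr_fun hB.compl fun w hw ↦ by
        have hw' : w ∉ B := hw
        simp [τ, hw']
  have hp : IsProbabilityMeasure (G.map τ) := Measure.isProbabilityMeasure_map hτ.aemeasurable
  let γ' : ProbabilityMeasure (E × ProbabilityMeasure Y) := ⟨G.map τ, hp⟩
  have hγ' : γ' ∈ relaxed ρ ν := by
    constructor
    · change (G.map τ).map Prod.fst = ρ
      rw [Measure.map_map measurable_fst hτ, ← hγ.1]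
      have : Prod.fst ∘ τ = Prod.fst ∘ Prod.fst := rfl
      rw [this, ← Measure.map_map measurable_fst measurable_fst]
      congr 1
      exact Measure.fst_prod
    · intro s hs
      change ∫⁻ z, (z.2 : Measure Y) s ∂(G.map τ) = ν s
      have hs' : Measurable fun z : E × ProbabilityMeasure Y ↦ (z.2 : Measure Y) s :=
        (measurable_apply_probabilityMeasure hs).comp measurable_snd
      rw [hsplit _ hs', ← hγ.2 s hs, ← hfst _ hs',
        ← lintegral_add_compl (μ := G) (fun w ↦ (w.1.2 : Measure Y) s) hB]
      congr 1
      exact hswap (fun w ↦ (w.1.2 : Measure Y) s) (hs'.comp measurable_fst)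
  have hcost := hmin γ' hγ'
  change ∫⁻ z, k z ∂m ≤ ∫⁻ z, k z ∂(G.map τ) at hcost
  change ∫⁻ z, k z ∂m ≠ ∞ at hfin
  rw [hsplit k hk, ← hfst k hk, ← lintegral_add_compl _ hB] at hcost
  rw [← hfst k hk, ← lintegral_add_compl _ hB] at hfin
  have hxf : ∫⁻ w in B, x w ∂G ≠ ∞ := fun h ↦ hfin (by
    change ∫⁻ w in B, x w ∂G + _ = ∞
    rw [h, top_add])
  have hxcf : ∫⁻ w in Bᶜ, x w ∂G ≠ ∞ := fun h ↦ hfin (by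
    change _ + ∫⁻ w in Bᶜ, x w ∂G = ∞
    rw [h, add_top])
  have hle : ∫⁻ w in B, x w ∂G ≤ ∫⁻ w in B, y w ∂G :=
    (ENNReal.add_le_add_iff_right hxcf).1 hcost
  have hxx : ∫⁻ w in B, (x w + x w.swap) ∂G = ∫⁻ w in B, x w ∂G + ∫⁻ w in B, x w ∂G := by
    rw [lintegral_add_left hx, hswap x hx]
  have hyy : ∫⁻ w in B, (y w + y w.swap) ∂G = ∫⁻ w in B, y w ∂G + ∫⁻ w in B, y w ∂G := by
    rw [lintegral_add_left hy, hswap y hy]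
  have hmono : ∫⁻ w in B, (y w + y w.swap) ∂G ≤ ∫⁻ w in B, (x w + x w.swap) ∂G :=
    lintegral_mono_ae ((ae_restrict_iff' hB).2 (ae_of_all _ fun w (hw : _ < _) ↦ hw.le))
  by_contra hne
  have hlt : ∫⁻ w in B, (y w + y w.swap) ∂G < ∫⁻ w in B, (x w + x w.swap) ∂G := by
    refine lintegral_strict_mono (by rwa [Ne, Measure.restrict_eq_zero])
      (hx.add (hx.comp measurable_swap)).aemeasurable ?_
      ((ae_restrict_iff' hB).2 (ae_of_all _ fun w hw ↦ hw))
    refine ne_top_of_le_ne_top ?_ hmono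
    rw [hxx]
    exact ENNReal.add_ne_top.2 ⟨hxf, hxf⟩
  rw [hxx, hyy] at hlt
  exact absurd (add_le_add hle hle) (not_le.2 hlt)

/-- The almost sure inequality passes, by continuity of `Ψ`, to all pairs of points in the support
`M` of the joint law of `(a, g p)` under a relaxed minimizer of finite cost. -/
theorem exists_monotone_set {F : Type*} [NormedAddCommGroup F] [MeasurableSpace F] [BorelSpace F]
    [SecondCountableTopology F] {ρ : Measure F} {ν : Measure Y}
    {g : ProbabilityMeasure Y → F} (hg : Measurable g) {Ψ : F → ℝ} (hΨ : Continuous Ψ)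
    (hΨ0 : ∀ v, 0 ≤ Ψ v)
    {γ : ProbabilityMeasure (F × ProbabilityMeasure Y)} (hγ : γ ∈ relaxed ρ ν)
    (hmin : ∀ γ' ∈ relaxed ρ ν, relaxedCost (fun z ↦ Ψ (g z.2 - z.1)) γ
      ≤ relaxedCost (fun z ↦ Ψ (g z.2 - z.1)) γ')
    (hfin : relaxedCost (fun z ↦ Ψ (g z.2 - z.1)) γ ≠ ∞) :
    ∃ M : Set (F × F), (∀ᵐ z ∂(γ : Measure (F × ProbabilityMeasure Y)), (z.1, g z.2) ∈ M) ∧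
      ∀ z₁ ∈ M, ∀ z₂ ∈ M,
        Ψ (z₁.2 - z₁.1) + Ψ (z₂.2 - z₂.1) ≤ Ψ (z₁.2 - z₂.1) + Ψ (z₂.2 - z₁.1) := by
  let m : Measure (F × ProbabilityMeasure Y) := (γ : Measure (F × ProbabilityMeasure Y))
  let θ : F × ProbabilityMeasure Y → F × F := fun z ↦ (z.1, g z.2)
  have hθ : Measurable θ := measurable_fst.prodMk (hg.comp measurable_snd)
  have hc : Measurable fun z : F × ProbabilityMeasure Y ↦ Ψ (g z.2 - z.1) :=
    hΨ.measurable.comp ((hg.comp measurable_snd).sub measurable_fst)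
  have hae := ae_exchange_of_isMin hc hγ hmin hfin
  refine ⟨(m.map θ).support, ?_, fun z₁ h₁ z₂ h₂ ↦ ?_⟩
  · exact ae_of_ae_map hθ.aemeasurable Measure.support_mem_ae
  · by_contra hlt
    rw [not_le] at hlt
    let O : Set ((F × F) × (F × F)) := {w | Ψ (w.1.2 - w.2.1) + Ψ (w.2.2 - w.1.1) <
      Ψ (w.1.2 - w.1.1) + Ψ (w.2.2 - w.2.1)}
    have hO : IsOpen O := isOpen_lt (by fun_prop) (by fun_prop)
    obtain ⟨U, V, hU, hV, hzU, hzV, hUV⟩ := isOpen_prod_iff.1 hO z₁ z₂ hlt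
    have hposU := (Measure.mem_support_iff_forall z₁).1 h₁ U (hU.mem_nhds hzU)
    have hposV := (Measure.mem_support_iff_forall z₂).1 h₂ V (hV.mem_nhds hzV)
    rw [Measure.map_apply hθ hU.measurableSet] at hposU
    rw [Measure.map_apply hθ hV.measurableSet] at hposV
    have hpos : 0 < (m.prod m) ((θ ⁻¹' U) ×ˢ (θ ⁻¹' V)) := by
      rw [Measure.prod_prod]
      exact ENNReal.mul_pos hposU.ne' hposV.ne'
    obtain ⟨w, hw, hwle⟩ : ∃ w ∈ (θ ⁻¹' U) ×ˢ (θ ⁻¹' V),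
        ENNReal.ofReal (Ψ (g w.1.2 - w.1.1)) + ENNReal.ofReal (Ψ (g w.2.2 - w.2.1)) ≤
        ENNReal.ofReal (Ψ (g w.2.2 - w.1.1)) + ENNReal.ofReal (Ψ (g w.1.2 - w.2.1)) := by
      by_contra! hcon
      refine hpos.ne' (measure_mono_null (fun w hw ↦ ?_) hae)
      exact not_le.2 (hcon w hw)
    have hwO : (θ w.1, θ w.2) ∈ O := hUV ⟨hw.1, hw.2⟩
    rw [← ENNReal.ofReal_add (hΨ0 _) (hΨ0 _), ← ENNReal.ofReal_add (hΨ0 _) (hΨ0 _),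
      ENNReal.ofReal_le_ofReal_iff (add_nonneg (hΨ0 _) (hΨ0 _))] at hwle
    have hwO' : Ψ (g w.1.2 - w.2.1) + Ψ (g w.2.2 - w.1.1) <
      Ψ (g w.1.2 - w.1.1) + Ψ (g w.2.2 - w.2.1) := hwO
    linarith

end Monotonicity

/-! ### From relaxed plans to maps -/

section Selection

open ProbabilityTheory Filter

variable {X Y E : Type*} [MeasurableSpace X] [MeasurableSpace Y] [MeasurableSpace E]

theorem measurable_of_forall_apply {T : X → ProbabilityMeasure Y}
    (h : ∀ s, MeasurableSet s → Measurable fun x ↦ (T x : Measure Y) s) : Measurable T :=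
  (Measure.measurable_of_measurable_coe (fun x ↦ (T x : Measure Y)) h).subtype_mk

theorem setLIntegral_selection [MeasurableSingletonClass E] {μ : Measure X} {f : X → E} (hf : Measurable f)
    {κ : Kernel E (ProbabilityMeasure Y)} [IsMarkovKernel κ] {B : Set E} (hB : B.Countable)
    {T : X → ProbabilityMeasure Y} (hT : Measurable T)
    (hTB : ∀ a ∈ B, (μ.restrict (f ⁻¹' {a})).map T = μ (f ⁻¹' {a}) • κ a)
    {k : E × ProbabilityMeasure Y → ℝ≥0∞} (hk : Measurable k) :
    ∫⁻ x in f ⁻¹' B, k (f x, T x) ∂μ = ∫⁻ a in B, ∫⁻ p, k (a, p) ∂(κ a) ∂(μ.map f) := by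
  have hpre : f ⁻¹' B = ⋃ a ∈ B, f ⁻¹' {a} := by
    ext x
    simp
  rw [hpre, lintegral_biUnion hB (fun a _ ↦ hf (measurableSet_singleton a))]
  · rw [lintegral_countable _ hB]
    refine tsum_congr fun a ↦ ?_
    rw [Measure.map_apply hf (measurableSet_singleton _)]
    have hka : Measurable fun p ↦ k (a, p) := hk.comp measurable_prodMk_left
    have h1 : ∫⁻ x in f ⁻¹' {(a : E)}, k (f x, T x) ∂μ = ∫⁻ x in f ⁻¹' {(a : E)}, k (a, T x) ∂μ :=
      setLIntegral_congr_fun (hf (measurableSet_singleton _)) fun x (hx : f x = a) ↦ by simp [hx]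
    rw [h1, ← lintegral_map hka hT, hTB a a.2, lintegral_smul_measure, smul_eq_mul, mul_comm]
  · exact Set.pairwiseDisjoint_fiber f B

theorem measurable_bary (κ : Kernel E (ProbabilityMeasure Y)) [IsMarkovKernel κ] {f : X → E}
    (hf : Measurable f) : Measurable fun x ↦ bary (κ (f x)) := by
  refine measurable_of_forall_apply fun s hs ↦ ?_
  simp_rw [bary_apply _ hs]
  exact (measurable_apply_probabilityMeasure hs).lintegral_kernel.comp hf

variable [TopologicalSpace X] [PolishSpace X] [BorelSpace X] [MeasurableSingletonClass E]
  [TopologicalSpace Y] [PolishSpace Y] [BorelSpace Y]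

/-- A measurable map which realizes the law `κ a` exactly on the fibres above the points `a` of a
countable set, and equals the barycenter of `κ (f x)` at the other points. -/
theorem exists_selection {μ : Measure X} [IsFiniteMeasure μ] {f : X → E} (hf : Measurable f)
    (κ : Kernel E (ProbabilityMeasure Y)) [IsMarkovKernel κ] {B : Set E} (hB : B.Countable)
    (hμ : B.Nonempty → NullSingletonClass μ) :
    ∃ T : X → ProbabilityMeasure Y, Measurable T ∧ (∀ x, f x ∉ B → T x = bary (κ (f x))) ∧
      ∀ a ∈ B, (μ.restrict (f ⁻¹' {a})).map T = μ (f ⁻¹' {a}) • κ a := by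
  classical
  have hex : ∀ a, ∃ T : X → ProbabilityMeasure Y, Measurable T ∧
      (a ∈ B → (μ.restrict (f ⁻¹' {a})).map T = μ (f ⁻¹' {a}) • κ a) := by
    intro a
    by_cases ha : a ∈ B
    · have := hμ ⟨a, ha⟩
      have : Nonempty (ProbabilityMeasure Y) := ⟨bary (κ a)⟩
      obtain ⟨T, hT, h⟩ := exists_measurable_map_eq_smul (μ.restrict (f ⁻¹' {a})) (κ a)
      exact ⟨T, hT, fun _ ↦ by simpa using h⟩
    · exact ⟨fun x ↦ bary (κ (f x)), measurable_bary κ hf, fun h ↦ absurd h ha⟩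
  choose S hS hSmap using hex
  let T : X → ProbabilityMeasure Y := fun x ↦ if f x ∈ B then S (f x) x else bary (κ (f x))
  have hT : Measurable T := by
    intro s hs
    have : T ⁻¹' s = (⋃ a ∈ B, f ⁻¹' {a} ∩ S a ⁻¹' s) ∪
        ((f ⁻¹' B)ᶜ ∩ (fun x ↦ bary (κ (f x))) ⁻¹' s) := by
      ext x
      by_cases hx : f x ∈ B <;> simp [T, hx]
    rw [this]
    exact (MeasurableSet.biUnion hB fun a _ ↦
      (hf (measurableSet_singleton a)).inter (hS a hs)).union
      ((hf hB.measurableSet).compl.inter (measurable_bary κ hf hs))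
  refine ⟨T, hT, fun x hx ↦ if_neg hx, fun a ha ↦ ?_⟩
  rw [← hSmap a ha]
  refine Measure.map_congr ?_
  filter_upwards [ae_restrict_mem (hf (measurableSet_singleton a))] with x hx
  have hx' : f x = a := hx
  simp [T, hx', ha]

/-- A relaxed plan with kernel `κ` is replaced, without increasing the cost, by a map of barycenter
`ν`. Above a countable set `B` the law `κ a` is realized exactly, which is possible because `μ` has
no atoms; elsewhere it is collapsed to its barycenter. -/
theorem exists_map_le {μ : Measure X} [IsProbabilityMeasure μ] {ν : Measure Y} {f : X → E}
    (hf : Measurable f) (κ : Kernel E (ProbabilityMeasure Y)) [IsMarkovKernel κ]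
    (hκ : ∀ s, MeasurableSet s → ∫⁻ a, ∫⁻ p, (p : Measure Y) s ∂(κ a) ∂(μ.map f) = ν s)
    {B : Set E} (hB : B.Countable) (hμ : B.Nonempty → NullSingletonClass μ)
    {k : E × ProbabilityMeasure Y → ℝ≥0∞} (hk : Measurable k)
    (hle : ∀ᵐ x ∂μ, f x ∉ B → k (f x, bary (κ (f x))) ≤ ∫⁻ p, k (f x, p) ∂(κ (f x))) :
    ∃ T : X → ProbabilityMeasure Y, Measurable T ∧
      (∀ s, MeasurableSet s → ∫⁻ x, (T x : Measure Y) s ∂μ = ν s) ∧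
      ∫⁻ x, k (f x, T x) ∂μ ≤ ∫⁻ a, ∫⁻ p, k (a, p) ∂(κ a) ∂(μ.map f) := by
  obtain ⟨T, hT, hTbary, hTB⟩ := exists_selection hf κ hB hμ
  have hmB : MeasurableSet (f ⁻¹' B) := hf hB.measurableSet
  have hrest : ∀ k : E × ProbabilityMeasure Y → ℝ≥0∞, Measurable k →
      ∫⁻ x in (f ⁻¹' B)ᶜ, ∫⁻ p, k (f x, p) ∂(κ (f x)) ∂μ =
        ∫⁻ a in Bᶜ, ∫⁻ p, k (a, p) ∂(κ a) ∂(μ.map f) := by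
    intro k hk
    rw [setLIntegral_map hB.measurableSet.compl hk.lintegral_kernel_prod_right' hf]
    rfl
  refine ⟨T, hT, fun s hs ↦ ?_, ?_⟩
  · have hks : Measurable fun z : E × ProbabilityMeasure Y ↦ (z.2 : Measure Y) s :=
      (measurable_apply_probabilityMeasure hs).comp measurable_snd
    rw [← hκ s hs, ← lintegral_add_compl _ hmB,
      setLIntegral_selection hf hB hT hTB (k := fun z ↦ (z.2 : Measure Y) s) hks,
      ← lintegral_add_compl (μ := μ.map f) _ hB.measurableSet, ← hrest _ hks]
    congr 1
    exact setLIntegral_congr_fun hmB.compl fun x hx ↦ by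
      have hx' : f x ∉ B := hx
      simp only [hTbary x hx', bary_apply _ hs]
  · rw [← lintegral_add_compl _ hmB, setLIntegral_selection hf hB hT hTB hk,
      ← lintegral_add_compl (μ := μ.map f) _ hB.measurableSet, ← hrest _ hk]
    gcongr 1
    refine lintegral_mono_ae ((ae_restrict_iff' hmB.compl).2 ?_)
    filter_upwards [hle] with x hx hxB
    rw [hTbary x hxB]
    exact hx hxB

end Selection

/-! ### Conditional measures of plans -/

section Conditional

open ProbabilityTheory Filter

variable {X Y : Type*} [MeasurableSpace X]
  [MeasurableSpace Y] [StandardBorelSpace Y] [Nonempty Y]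

theorem measurable_condMeas (σ : ProbabilityMeasure (X × Y)) : Measurable (condMeas σ) :=
  (σ : Measure (X × Y)).condKernel.measurable.subtype_mk

theorem lintegral_condMeas_apply {μ : Measure X} {ν : Measure Y} {σ : ProbabilityMeasure (X × Y)}
    (h₁ : (σ : Measure (X × Y)).map Prod.fst = μ) (h₂ : (σ : Measure (X × Y)).map Prod.snd = ν)
    {s : Set Y} (hs : MeasurableSet s) : ∫⁻ x, (condMeas σ x : Measure Y) s ∂μ = ν s := by
  have h := Measure.setLIntegral_condKernel_eq_measure_prod (ρ := (σ : Measure (X × Y)))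
    MeasurableSet.univ hs
  rw [setLIntegral_univ, Measure.fst, h₁, Set.univ_prod] at h
  rw [← h₂, Measure.map_apply measurable_snd hs, ← h]
  rfl

/-- Every measurable map `T : X → 𝒫(Y)` of barycenter `ν` is the family of conditional measures of a
plan in `Π(μ, ν)`. -/
theorem exists_condMeas_ae_eq {μ : Measure X} [IsProbabilityMeasure μ] {ν : Measure Y}
    {T : X → ProbabilityMeasure Y} (hT : Measurable T)
    (hν : ∀ s, MeasurableSet s → ∫⁻ x, (T x : Measure Y) s ∂μ = ν s) :
    ∃ σ : ProbabilityMeasure (X × Y), (σ : Measure (X × Y)).map Prod.fst = μ ∧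
      (σ : Measure (X × Y)).map Prod.snd = ν ∧ condMeas σ =ᵐ[μ] T := by
  let κ : Kernel X Y := ⟨fun x ↦ (T x : Measure Y), measurable_coe_probabilityMeasure.comp hT⟩
  have : IsMarkovKernel κ := ⟨fun x ↦ (T x).2⟩
  have hfst : (μ ⊗ₘ κ).fst = μ := Measure.fst_compProd μ κ
  refine ⟨⟨μ ⊗ₘ κ, inferInstance⟩, hfst, ?_, ?_⟩
  · ext s hs
    change (μ ⊗ₘ κ).snd s = ν s
    rw [Measure.snd_compProd, Measure.bind_apply hs κ.aemeasurable, ← hν s hs]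
    rfl
  · have h := eq_condKernel_of_measure_eq_compProd (ρ := μ ⊗ₘ κ) κ (by rw [hfst])
    rw [hfst] at h
    filter_upwards [h] with x hx
    exact Subtype.ext hx.symm

end Conditional

/-! ### Structure of relaxed minimizers -/

section Final

open ProbabilityTheory Filter Topology

variable {X Y : Type*} [MeasurableSpace X]
  [MeasurableSpace Y]

theorem contDiff_one_of_gradient {E : Type*} [NormedAddCommGroup E] [InnerProductSpace ℝ E]
    [CompleteSpace E] {Ψ : E → ℝ} (h : Differentiable ℝ Ψ)
    (hgrad : Continuous fun v ↦ gradient Ψ v) : ContDiff ℝ 1 Ψ := by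
  refine contDiff_one_iff_fderiv.2 ⟨h, ?_⟩
  have : fderiv ℝ Ψ = fun v ↦ InnerProductSpace.toDual ℝ E (gradient Ψ v) := by
    ext1 v
    simp [gradient]
  rw [this]
  exact (InnerProductSpace.toDual ℝ E).continuous.comp hgrad

/-- The joint law of `(f, T)` under `μ` is admissible for the relaxed problem, with the same cost
as `T`. -/
theorem exists_relaxed_of_map {E : Type*} [MeasurableSpace E] {μ : Measure X}
    [IsProbabilityMeasure μ] {ν : Measure Y} {f : X → E} (hf : Measurable f)
    {T : X → ProbabilityMeasure Y} (hT : Measurable T)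
    (hν : ∀ s, MeasurableSet s → ∫⁻ x, (T x : Measure Y) s ∂μ = ν s)
    {c : E × ProbabilityMeasure Y → ℝ} (hc : Measurable c) :
    ∃ γ ∈ relaxed (μ.map f) ν,
      relaxedCost c γ = ∫⁻ x, ENNReal.ofReal (c (f x, T x)) ∂μ := by
  have hfT : Measurable fun x ↦ (f x, T x) := hf.prodMk hT
  refine ⟨⟨μ.map fun x ↦ (f x, T x), Measure.isProbabilityMeasure_map hfT.aemeasurable⟩,
    ⟨?_, fun s hs ↦ ?_⟩, ?_⟩
  · exact Measure.map_map measurable_fst hfT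
  · rw [← hν s hs]
    exact lintegral_map ((measurable_apply_probabilityMeasure hs).comp measurable_snd) hfT
  · exact lintegral_map hc.ennreal_ofReal hfT

/-- When the pairs `(a, g p)` stay in a set `M` on which exchanges do not decrease the cost, the law
`κ (f x)` has, for almost every `x`, a constant image under `g`, unless `f x` belongs to a countable
set `B`. This exceptional set is only needed for `d = 1`, where `μ` has no atoms. -/
theorem exists_countable_ae_const {μ : Measure X} {d : ℕ}
    {f : X → EuclideanSpace ℝ (Fin d)} {g : ProbabilityMeasure Y → EuclideanSpace ℝ (Fin d)}
    {Ψ : EuclideanSpace ℝ (Fin d) → ℝ}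
    (hΨconv : StrictConvexOn ℝ Set.univ Ψ) (hΨd : ContDiff ℝ 1 Ψ)
    (hμdim : 1 < d → ∀ A : Set (EuclideanSpace ℝ (Fin d)),
      dimH A ≤ (d : ℝ≥0∞) - 1 → μ (f ⁻¹' A) = 0)
    (hμatomless : d = 1 → NullSingletonClass μ)
    {κ : Kernel (EuclideanSpace ℝ (Fin d)) (ProbabilityMeasure Y)}
    [IsMarkovKernel κ] {M : Set (EuclideanSpace ℝ (Fin d) × EuclideanSpace ℝ (Fin d))}
    (hM : ∀ z₁ ∈ M, ∀ z₂ ∈ M,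
        Ψ (z₁.2 - z₁.1) + Ψ (z₂.2 - z₂.1) ≤ Ψ (z₁.2 - z₂.1) + Ψ (z₂.2 - z₁.1))
    (hae : ∀ᵐ x ∂μ, ∀ᵐ p ∂(κ (f x)), (f x, g p) ∈ M) :
    ∃ B : Set (EuclideanSpace ℝ (Fin d)), B.Countable ∧ (B.Nonempty → NullSingletonClass μ) ∧
      ∀ᵐ x ∂μ, f x ∉ B → ∃ s, ∀ᵐ p ∂(κ (f x)), g p = s := by
  obtain ⟨hdim, hcount⟩ := dimH_multivalued_le hΨconv hΨd M hM
  rw [finrank_euclideanSpace_fin] at hdim hcount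
  set A := {a | ∃ b b', b ≠ b' ∧ (a, b) ∈ M ∧ (a, b') ∈ M} with hA
  have hconst : ∀ a, a ∉ A → (∀ᵐ p ∂(κ a), (a, g p) ∈ M) → ∃ s, ∀ᵐ p ∂(κ a), g p = s := by
    intro a ha h
    obtain ⟨p₀, hp₀⟩ := h.exists
    refine ⟨g p₀, h.mono fun p hp ↦ ?_⟩
    by_contra hne
    exact ha ⟨g p, g p₀, hne, hp, hp₀⟩
  rcases lt_trichotomy d 1 with hd | hd | hd
  · obtain rfl : d = 0 := by omega
    refine ⟨∅, Set.countable_empty, fun h ↦ absurd rfl h.ne_empty, ?_⟩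
    filter_upwards [hae] with x hx _
    exact hconst (f x) (fun ⟨b, b', hne, _⟩ ↦ hne (Subsingleton.elim b b')) hx
  · exact ⟨A, hcount hd, fun _ ↦ hμatomless hd, hae.mono fun x hx hxA ↦ hconst (f x) hxA hx⟩
  · refine ⟨∅, Set.countable_empty, fun h ↦ absurd rfl h.ne_empty, ?_⟩
    have hnull : ∀ᵐ x ∂μ, f x ∉ A := measure_eq_zero_iff_ae_notMem.1 (hμdim hd A hdim)
    filter_upwards [hae, hnull] with x hx hxA _
    exact hconst (f x) hxA hx

end Final

/-! ### Existence of a minimizer -/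

/-- **Existence for the nonlinear Kantorovich problem with cost `Ψ(g(σ^x) − f(x))`,
case (ii): convex sublevel sets of `g` and `Ψ` increasing.** Let `X, Y` be Polish spaces,
`μ, ν` Borel probability measures, `f : X → ℝ^d` continuous, `g : 𝒫(Y) → ℝ^d` bounded
continuous, `Ψ : ℝ^d → ℝ` nonnegative strictly convex, differentiable with locally
Lipschitz gradient. Assume `μ` vanishes on preimages under `f` of sets of Hausdorff
dimension at most `d − 1` if `d > 1`, and `μ` is atomless if `d = 1`. If the sublevel sets
`{p : g(p) ≤ c}` (coordinatewise order) are convex and `Ψ` is increasing for the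
coordinatewise order, then the infimum of `σ ↦ ∫ Ψ(g(σ^x) − f(x)) dμ` over `Π(μ,ν)`
is attained. -/
theorem exists_min_nonlinear_kantorovich_sublevelSets
    {X Y : Type*} [MeasurableSpace X] [TopologicalSpace X] [PolishSpace X] [BorelSpace X]
    [MeasurableSpace Y] [TopologicalSpace Y] [PolishSpace Y] [BorelSpace Y] [Nonempty Y]
    (μ : Measure X) [IsProbabilityMeasure μ] (ν : Measure Y) [IsProbabilityMeasure ν]
    {d : ℕ} (f : X → EuclideanSpace ℝ (Fin d)) (hf : Continuous f)
    (g : ProbabilityMeasure Y → EuclideanSpace ℝ (Fin d)) (hg : Continuous g)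
    (hgbd : ∃ R : ℝ, ∀ p, ‖g p‖ ≤ R)
    (Ψ : EuclideanSpace ℝ (Fin d) → ℝ)
    (hΨnonneg : ∀ v, 0 ≤ Ψ v)
    (hΨconv : StrictConvexOn ℝ Set.univ Ψ)
    (hΨdiff : Differentiable ℝ Ψ)
    (hΨgrad : LocallyLipschitz (fun v => gradient Ψ v))
    (hμdim : 1 < d → ∀ A : Set (EuclideanSpace ℝ (Fin d)),
      dimH A ≤ (d : ℝ≥0∞) - 1 → μ (f ⁻¹' A) = 0)
    (hμatomless : d = 1 → NoAtoms μ)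
    -- the sublevel sets {p ∈ 𝒫(Y) : g(p) ≤ c} (coordinatewise order) are convex
    (hsublevel : ∀ c : EuclideanSpace ℝ (Fin d), ∀ p₁ p₂ p : ProbabilityMeasure Y, ∀ t : ℝ,
      0 ≤ t → t ≤ 1 → (∀ i, g p₁ i ≤ c i) → (∀ i, g p₂ i ≤ c i) →
      (p : Measure Y) = ENNReal.ofReal t • (p₁ : Measure Y)
          + ENNReal.ofReal (1 - t) • (p₂ : Measure Y) →
      (∀ i, g p i ≤ c i))
    -- Ψ is increasing for the coordinatewise order on ℝ^d
    (hΨmono : ∀ u v : EuclideanSpace ℝ (Fin d), (∀ i, u i ≤ v i) → Ψ u ≤ Ψ v) :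
    ∃ σ : ProbabilityMeasure (X × Y),
      (σ : Measure (X × Y)).map Prod.fst = μ ∧
      (σ : Measure (X × Y)).map Prod.snd = ν ∧
      ∀ σ' : ProbabilityMeasure (X × Y),
        (σ' : Measure (X × Y)).map Prod.fst = μ →
        (σ' : Measure (X × Y)).map Prod.snd = ν →
        ∫⁻ x, ENNReal.ofReal (Ψ (g (condMeas σ x) - f x)) ∂μ ≤
          ∫⁻ x, ENNReal.ofReal (Ψ (g (condMeas σ' x) - f x)) ∂μ := by
  have hΨc : Continuous Ψ := hΨdiff.continuous
  have hΨd : ContDiff ℝ 1 Ψ := contDiff_one_of_gradient hΨdiff hΨgrad.continuous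
  let c : EuclideanSpace ℝ (Fin d) × ProbabilityMeasure Y → ℝ := fun z ↦ Ψ (g z.2 - z.1)
  have hc : Continuous c := hΨc.comp ((hg.comp continuous_snd).sub continuous_fst)
  let ρ : Measure (EuclideanSpace ℝ (Fin d)) := μ.map f
  have hρ : IsProbabilityMeasure ρ := Measure.isProbabilityMeasure_map hf.measurable.aemeasurable
  let π : ProbabilityMeasure (X × Y) := ⟨μ.prod ν, inferInstance⟩
  have hπ₁ : (π : Measure (X × Y)).map Prod.fst = μ := Measure.fst_prod
  have hπ₂ : (π : Measure (X × Y)).map Prod.snd = ν := Measure.snd_prod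
  have hrel : ∀ σ : ProbabilityMeasure (X × Y), (σ : Measure (X × Y)).map Prod.fst = μ →
      (σ : Measure (X × Y)).map Prod.snd = ν → ∃ γ ∈ relaxed ρ ν,
        relaxedCost c γ = ∫⁻ x, ENNReal.ofReal (Ψ (g (condMeas σ x) - f x)) ∂μ :=
    fun σ h₁ h₂ ↦ exists_relaxed_of_map hf.measurable (measurable_condMeas σ)
      (fun s hs ↦ lintegral_condMeas_apply h₁ h₂ hs) hc.measurable
  obtain ⟨γ, hγ, hmin⟩ : ∃ γ ∈ relaxed ρ ν, ∀ γ' ∈ relaxed ρ ν,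
      relaxedCost c γ ≤ relaxedCost c γ' := by
    obtain ⟨γ₀, hγ₀, -⟩ := hrel π hπ₁ hπ₂
    obtain ⟨γ, hγ, h⟩ := ((lowerSemicontinuous_relaxedCost hc).lowerSemicontinuousOn
      (relaxed ρ ν)).exists_isMinOn ⟨γ₀, hγ₀⟩ (isCompact_relaxed ρ ν)
    exact ⟨γ, hγ, fun γ' hγ' ↦ h hγ'⟩
  have hlower : ∀ σ' : ProbabilityMeasure (X × Y), (σ' : Measure (X × Y)).map Prod.fst = μ →
      (σ' : Measure (X × Y)).map Prod.snd = ν →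
      relaxedCost c γ ≤ ∫⁻ x, ENNReal.ofReal (Ψ (g (condMeas σ' x) - f x)) ∂μ := by
    intro σ' h₁ h₂
    obtain ⟨γ', hγ', h⟩ := hrel σ' h₁ h₂
    exact h ▸ hmin γ' hγ'
  -- If even the relaxed infimum is infinite, every plan is optimal.
  by_cases hfin : relaxedCost c γ = ∞
  · refine ⟨π, hπ₁, hπ₂, fun σ' h₁ h₂ ↦ ?_⟩
    have h := hlower σ' h₁ h₂
    rw [hfin, top_le_iff] at h
    rw [h]
    exact le_top
  obtain ⟨M, hMae, hM⟩ := exists_monotone_set hg.measurable hΨc hΨnonneg hγ hmin hfin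
  have hPne : Nonempty (ProbabilityMeasure Y) := ⟨condMeas π (nonempty_of_isProbabilityMeasure μ).some⟩
  let m : Measure (EuclideanSpace ℝ (Fin d) × ProbabilityMeasure Y) :=
    (γ : Measure (EuclideanSpace ℝ (Fin d) × ProbabilityMeasure Y))
  let κ := m.condKernel
  have hmρ : m.fst = ρ := hγ.1
  have hdis : ρ.compProd κ = m := by
    rw [← hmρ]
    exact m.disintegrate m.condKernel
  have hint : ∀ k : EuclideanSpace ℝ (Fin d) × ProbabilityMeasure Y → ℝ≥0∞, Measurable k →
      ∫⁻ a, ∫⁻ p, k (a, p) ∂(κ a) ∂ρ = ∫⁻ z, k z ∂m := by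
    intro k hk
    rw [← hdis, Measure.lintegral_compProd hk]
  have hMx : ∀ᵐ x ∂μ, ∀ᵐ p ∂(κ (f x)), (f x, g p) ∈ M := by
    refine ae_of_ae_map (p := fun a ↦ ∀ᵐ p ∂(κ a), (a, g p) ∈ M) hf.measurable.aemeasurable ?_
    have h : ∀ᵐ z ∂(ρ.compProd κ), (z.1, g z.2) ∈ M := by
      rw [hdis]
      exact hMae
    exact Measure.ae_ae_of_ae_compProd h
  obtain ⟨B, hBc, hBμ, hB⟩ := exists_countable_ae_const hΨconv hΨd hμdim
    (fun h ↦ hμatomless h) hM hMx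
  obtain ⟨T, hT, hTν, hTle⟩ := exists_map_le (ν := ν) hf.measurable κ
    (fun s hs ↦ (hint (fun z ↦ (z.2 : Measure Y) s)
      ((measurable_apply_probabilityMeasure hs).comp measurable_snd)).trans (hγ.2 s hs))
    hBc hBμ (k := fun z ↦ ENNReal.ofReal (c z)) hc.measurable.ennreal_ofReal (by
      filter_upwards [hB] with x hx hxB
      obtain ⟨s, hs⟩ := hx hxB
      -- The sublevel set `{g ≤ s}` is closed and convex, hence contains the barycenter.
      have hle : ∀ i, g (bary (κ (f x))) i ≤ s i := by
        refine bary_mem_of_isClosed (C := {p | ∀ i, g p i ≤ s i}) ?_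
          (fun p₁ h₁ p₂ h₂ p t ht₀ ht₁ hp ↦ hsublevel s p₁ p₂ p t ht₀ ht₁ h₁ h₂ hp) _
          (hs.mono fun p hp i ↦ by rw [hp])
        simp only [Set.ofPred_forall]
        exact isClosed_iInter fun i ↦ isClosed_le (by fun_prop) continuous_const
      have hconst : ∫⁻ p, ENNReal.ofReal (c (f x, p)) ∂(κ (f x)) =
          ENNReal.ofReal (Ψ (s - f x)) := by
        rw [lintegral_congr_ae (g := fun _ ↦ ENNReal.ofReal (Ψ (s - f x)))
          (hs.mono fun p hp ↦ by simp only [c, hp])]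
        simp
      rw [hconst]
      refine ENNReal.ofReal_le_ofReal (hΨmono _ _ fun i ↦ ?_)
      simpa using hle i)
  rw [hint _ hc.measurable.ennreal_ofReal] at hTle
  obtain ⟨σ, hσ₁, hσ₂, hσ⟩ := exists_condMeas_ae_eq hT hTν
  refine ⟨σ, hσ₁, hσ₂, fun σ' h₁ h₂ ↦ ?_⟩
  calc ∫⁻ x, ENNReal.ofReal (Ψ (g (condMeas σ x) - f x)) ∂μ
      = ∫⁻ x, ENNReal.ofReal (c (f x, T x)) ∂μ :=
        lintegral_congr_ae (hσ.mono fun x hx ↦ by simp only [c, hx])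
    _ ≤ relaxedCost c γ := hTle
    _ ≤ _ := hlower σ' h₁ h₂
end
end

section
/- Let μ be Lebesgue measure on [0,1] and let ν be the normalized Lebesgue measure on [−1,1] (i.e. with density 1/2). Let h(x, y) = (x² − y²)². Then the infimum of ∫₀¹ h(x, T(x)) dx over all Borel measurable maps T : [0,1] → ℝ with μ∘T⁻¹ ≼_c ν equals 0, and this infimum is not attained: there is no Borel measurable T with μ∘T⁻¹ ≼_c ν and ∫₀¹ (x² − T(x)²)² dx = 0, while there exists a sequence of Borel maps T_n with μ∘T_n⁻¹ ≼_c ν and ∫₀¹ (x² − T_n(x)²)² dx → 0. -/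
/-!
A map `T` of zero cost satisfies `T x = ± x` for almost every `x`. Integrability has to be secured
first: testing convex dominance with `(|y| - 1)₊` gives `|T| ≤ 1` almost everywhere
(`ae_abs_le_one`). Since `e^{ty} + e^{-ty}` is even, its integrals against `T₊μ` and `ν` coincide;
each of the two exponentials is convex, so each has the same integral against both measures
(`integral_exp_eq`). Equality of moment-generating functions yields `T₊μ = ν` (`map_eq_νnorm`).
This is impossible: the positive fixed points of `T` form a set `B` with `T⁻¹ B = B` up to a null
set, hence `μ B = ν B = μ B / 2`, so `μ B = 0` and `T ≤ 0` almost everywhere, whereas `ν` charges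
`(0, ∞)` (`not_zero_cost`).

A minimizing sequence is given by maps that transport `μ` to `ν` exactly while switching sign
quickly: on each cell of length `1/N`, the first half is stretched affinely onto the cell and the
second half onto its mirror image (`switchMap`). Convex dominance then holds with equality
(`integral_switchMap`), and `||T x| - x| ≤ 1/N` makes the cost `O(1/N²)` (`cost_switchMap_le`).
-/

open MeasureTheory ENNReal Filter

noncomputable section

/-- Convex dominance (convex order) `ζ ≼_c η` for Borel measures on a normed space:
both measures have finite first moments and `∫ φ dζ ≤ ∫ φ dη` for every convex
function `φ` integrable with respect to `η`. -/
def ConvexDom {E : Type*} [NormedAddCommGroup E] [NormedSpace ℝ E] [MeasurableSpace E]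
    (ζ η : Measure E) : Prop :=
  Integrable (fun u => ‖u‖) ζ ∧ Integrable (fun u => ‖u‖) η ∧
  ∀ φ : E → ℝ, ConvexOn ℝ Set.univ φ → Integrable φ η → ∫ u, φ u ∂ζ ≤ ∫ u, φ u ∂η

/-- Lebesgue measure on `[0,1]`. -/
def μ01 : Measure ℝ := volume.restrict (Set.Icc 0 1)

/-- Normalized Lebesgue measure on `[−1,1]` (density `1/2`). -/
def νnorm : Measure ℝ := (2⁻¹ : ℝ≥0∞) • volume.restrict (Set.Icc (-1) 1)

/-! ### The measures `μ` and `ν` -/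

instance : IsFiniteMeasure μ01 := by unfold μ01; infer_instance

instance : IsFiniteMeasure νnorm := by
  refine ⟨?_⟩
  simp only [νnorm, Measure.smul_apply, smul_eq_mul]
  exact ENNReal.mul_lt_top (by simp) (measure_lt_top _ _)

instance : IsProbabilityMeasure μ01 := ⟨by simp [μ01]⟩

lemma ae_mem_μ01 : ∀ᵐ x ∂μ01, x ∈ Set.Icc (0 : ℝ) 1 :=
  ae_restrict_mem measurableSet_Icc

lemma ae_mem_νnorm : ∀ᵐ x ∂νnorm, x ∈ Set.Icc (-1 : ℝ) 1 :=
  Measure.ae_smul_measure (ae_restrict_mem measurableSet_Icc) _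

lemma integral_μ01 (f : ℝ → ℝ) : ∫ x, f x ∂μ01 = ∫ x in (0 : ℝ)..1, f x := by
  rw [μ01, integral_Icc_eq_integral_Ioc, intervalIntegral.integral_of_le zero_le_one]

/-- Folding `ν` at the origin expresses its integrals through Lebesgue measure on `[0,1]`. -/
lemma integral_νnorm {f : ℝ → ℝ} (hf : Continuous f) :
    ∫ x, f x ∂νnorm = 2⁻¹ * ∫ x in (0 : ℝ)..1, (f x + f (-x)) := by
  rw [νnorm, integral_smul_measure, integral_Icc_eq_integral_Ioc,
    ← intervalIntegral.integral_of_le (by norm_num),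
    intervalIntegral.integral_add (hf.intervalIntegrable _ _)
      (Continuous.intervalIntegrable (by fun_prop : Continuous fun x => f (-x)) _ _),
    intervalIntegral.integral_comp_neg, neg_zero, add_comm,
    intervalIntegral.integral_add_adjacent_intervals (hf.intervalIntegrable _ _)
      (hf.intervalIntegrable _ _)]
  simp

lemma integrable_νnorm {f : ℝ → ℝ} (hf : Continuous f) : Integrable f νnorm := by
  unfold νnorm
  exact (hf.integrableOn_Icc).smul_measure (by simp)

/-- A measurable function bounded on `[0,1]` stays `μ`-integrable after composition with a
continuous function. -/
lemma integrable_comp_μ01 {T : ℝ → ℝ} (hT : Measurable T) {C : ℝ}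
    (hC : ∀ᵐ x ∂μ01, |T x| ≤ C) {f : ℝ → ℝ} (hf : Continuous f) :
    Integrable (fun x => f (T x)) μ01 := by
  obtain ⟨K, hK⟩ := (isCompact_Icc (a := -C) (b := C)).exists_bound_of_continuousOn
    hf.continuousOn
  refine Integrable.of_bound (hf.measurable.comp hT).aestronglyMeasurable K ?_
  filter_upwards [hC] with x hx
  exact hK _ (abs_le.mp hx)

/-! ### No admissible map has zero cost -/

/-- The convex function `(|y| - 1)₊` vanishes `ν`-almost everywhere, so convex dominance confines
`T` to `[-1,1]`. -/
lemma ae_abs_le_one {T : ℝ → ℝ} (hT : Measurable T) (hd : ConvexDom (μ01.map T) νnorm) :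
    ∀ᵐ x ∂μ01, |T x| ≤ 1 := by
  obtain ⟨h1, -, h3⟩ := hd
  have hcont : Continuous (fun y : ℝ => max (|y| - 1) 0) := by fun_prop
  have hconv : ConvexOn ℝ Set.univ (fun y : ℝ => max (|y| - 1) 0) := by
    have h := (convexOn_norm (convex_univ (𝕜 := ℝ) (E := ℝ))).sub
      (concaveOn_const (1 : ℝ) convex_univ)
    exact h.sup (convexOn_const 0 convex_univ)
  have h := h3 _ hconv (integrable_νnorm hcont)
  have h0 : ∫ y, max (|y| - 1) 0 ∂νnorm = 0 := by
    refine integral_eq_zero_of_ae ?_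
    filter_upwards [ae_mem_νnorm] with y hy
    exact max_eq_right (by linarith [abs_le.mpr hy])
  have hi : Integrable (fun y : ℝ => max (|y| - 1) 0) (μ01.map T) := by
    refine h1.mono hcont.aestronglyMeasurable (Eventually.of_forall fun y => ?_)
    rw [Real.norm_of_nonneg (le_max_right _ _), norm_norm]
    exact max_le (by rw [Real.norm_eq_abs]; linarith) (norm_nonneg _)
  rw [h0] at h
  have hz := (integral_eq_zero_iff_of_nonneg (fun y => le_max_right _ _) hi).mp
    (le_antisymm h (integral_nonneg fun y => le_max_right _ _))
  filter_upwards [ae_of_ae_map hT.aemeasurable hz] with x hx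
  have := le_max_left (|T x| - 1) 0
  have hx' : max (|T x| - 1) 0 = 0 := hx
  linarith

lemma ae_eq_or_eq_neg {T : ℝ → ℝ} (hT : Measurable T) (hd : ConvexDom (μ01.map T) νnorm)
    (h0 : ∫ x, (x ^ 2 - T x ^ 2) ^ 2 ∂μ01 = 0) :
    ∀ᵐ x ∂μ01, T x = x ∨ T x = -x := by
  have hb := ae_abs_le_one hT hd
  have hi : Integrable (fun x => (x ^ 2 - T x ^ 2) ^ 2) μ01 := by
    refine Integrable.of_bound (by fun_prop) 1 ?_
    filter_upwards [hb, ae_mem_μ01] with x hx hm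
    have h1 : T x ^ 2 ≤ 1 := (sq_le_one_iff_abs_le_one _).mpr hx
    have h2 : x ^ 2 ≤ 1 := (sq_le_one_iff_abs_le_one _).mpr (abs_le.mpr ⟨by linarith [hm.1], hm.2⟩)
    rw [Real.norm_of_nonneg (sq_nonneg _), sq_le_one_iff_abs_le_one, abs_le]
    constructor <;> nlinarith [sq_nonneg x, sq_nonneg (T x)]
  have hz := (integral_eq_zero_iff_of_nonneg (fun y => sq_nonneg _) hi).mp h0
  filter_upwards [hz] with x hx
  have h2 : x ^ 2 - T x ^ 2 = 0 := pow_eq_zero_iff (two_ne_zero) |>.mp hx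
  exact sq_eq_sq_iff_eq_or_eq_neg.mp (by linarith)

lemma convexOn_exp_mul (t : ℝ) : ConvexOn ℝ Set.univ (fun y : ℝ => Real.exp (t * y)) := by
  have h := convexOn_exp.comp_linearMap (LinearMap.mul ℝ ℝ t)
  simpa [Function.comp_def] using h

/-- For `T = ±x`, the exponentials `e^{ty}` and `e^{-ty}` have the same total integral against
`T₊μ` and against `ν`, so the two convex-order inequalities are equalities. -/
lemma integral_exp_eq {T : ℝ → ℝ} (hT : Measurable T) (hd : ConvexDom (μ01.map T) νnorm)
    (he : ∀ᵐ x ∂μ01, T x = x ∨ T x = -x) (t : ℝ) :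
    ∫ x, Real.exp (t * T x) ∂μ01 = ∫ y, Real.exp (t * y) ∂νnorm := by
  have hb := ae_abs_le_one hT hd
  have hc (s : ℝ) : Continuous (fun y : ℝ => Real.exp (s * y)) := by fun_prop
  have hle (s : ℝ) : ∫ x, Real.exp (s * T x) ∂μ01 ≤ ∫ y, Real.exp (s * y) ∂νnorm := by
    have h := hd.2.2 _ (convexOn_exp_mul s) (integrable_νnorm (hc s))
    rwa [integral_map hT.aemeasurable (hc s).aestronglyMeasurable] at h
  have hsum : ∫ x, Real.exp (t * T x) ∂μ01 + ∫ x, Real.exp (-t * T x) ∂μ01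
      = ∫ y, Real.exp (t * y) ∂νnorm + ∫ y, Real.exp (-t * y) ∂νnorm := by
    rw [← integral_add (integrable_comp_μ01 hT hb (hc t)) (integrable_comp_μ01 hT hb (hc (-t))),
      integral_νnorm (hc t), integral_νnorm (hc (-t)), ← integral_μ01, ← integral_μ01]
    have e1 : ∫ x, (Real.exp (t * T x) + Real.exp (-t * T x)) ∂μ01
        = ∫ x, (Real.exp (t * x) + Real.exp (t * -x)) ∂μ01 := by
      refine integral_congr_ae ?_
      filter_upwards [he] with x hx
      rcases hx with hx | hx <;> simp [hx, add_comm]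
    have e2 : ∫ x, (Real.exp (-t * x) + Real.exp (-t * -x)) ∂μ01
        = ∫ x, (Real.exp (t * x) + Real.exp (t * -x)) ∂μ01 := by
      congr 1; ext x; simp [add_comm]
    rw [e1, e2]; ring
  linarith [hle t, hle (-t)]

lemma map_eq_νnorm {T : ℝ → ℝ} (hT : Measurable T) (hd : ConvexDom (μ01.map T) νnorm)
    (he : ∀ᵐ x ∂μ01, T x = x ∨ T x = -x) : μ01.map T = νnorm := by
  have hb := ae_abs_le_one hT hd
  have hset : ProbabilityTheory.integrableExpSet T μ01 = Set.univ := by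
    refine Set.eq_univ_of_forall fun t => ?_
    exact integrable_comp_μ01 hT hb (f := fun y => Real.exp (t * y)) (by fun_prop)
  have hmgf : ProbabilityTheory.mgf T μ01 = ProbabilityTheory.mgf id νnorm := by
    funext t
    exact integral_exp_eq hT hd he t
  have h := ProbabilityTheory.eqOn_complexMGF_of_mgf hmgf
  rw [hset] at h
  have h2 := Measure.ext_of_complexMGF_eq hT.aemeasurable aemeasurable_id
    (funext fun z => h (by simp) : ProbabilityTheory.complexMGF T μ01
      = ProbabilityTheory.complexMGF id νnorm)
  simpa using h2

lemma νnorm_apply_of_pos {B : Set ℝ} (hB : MeasurableSet B) (hpos : ∀ y ∈ B, 0 < y) :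
    νnorm B = 2⁻¹ * μ01 B := by
  have : B ∩ Set.Icc (-1) 1 = B ∩ Set.Icc 0 1 := by
    ext y
    constructor
    · rintro ⟨h, h'⟩; exact ⟨h, (hpos y h).le, h'.2⟩
    · rintro ⟨h, h'⟩; exact ⟨h, by linarith [h'.1], h'.2⟩
  simp [νnorm, μ01, Measure.restrict_apply hB, this]

lemma not_zero_cost {T : ℝ → ℝ} (hT : Measurable T) (hd : ConvexDom (μ01.map T) νnorm)
    (h0 : ∫ x, (x ^ 2 - T x ^ 2) ^ 2 ∂μ01 = 0) : False := by
  have he := ae_eq_or_eq_neg hT hd h0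
  have hmap := map_eq_νnorm hT hd he
  -- On the set `B` of positive fixed points `T` is the identity, while `ν` halves its mass.
  set B : Set ℝ := {y | 0 < y ∧ T y = y} with hBdef
  have hB : MeasurableSet B :=
    (measurableSet_lt measurable_const measurable_id).inter (measurableSet_eq_fun hT measurable_id)
  have hpre : T ⁻¹' B =ᵐ[μ01] B := by
    filter_upwards [he, ae_mem_μ01] with x hx hm
    refine propext (?_ : T x ∈ B ↔ x ∈ B)
    rcases hx with hx | hx
    · rw [hx]
    · have h1 : T x ∉ B := fun h => by linarith [h.1, hm.1]
      have h2 : x ∉ B := fun h => by linarith [h.1, h.2]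
      simp [h1, h2]
  have hhalf : μ01 B = 2⁻¹ * μ01 B := by
    rw [← νnorm_apply_of_pos hB (fun y h => h.1), ← hmap, Measure.map_apply hT hB,
      measure_congr hpre]
  have hzero : μ01 B = 0 := by
    have h := congrArg ENNReal.toReal hhalf
    rw [ENNReal.toReal_mul] at h
    simp only [ENNReal.toReal_inv, ENNReal.toReal_ofNat] at h
    have h' : (μ01 B).toReal = 0 := by linarith
    exact ((ENNReal.toReal_eq_zero_iff _).mp h').resolve_right (measure_ne_top _ _)
  have hI : μ01 (T ⁻¹' Set.Ioi 0) = 0 := by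
    have hBae : ∀ᵐ x ∂μ01, x ∉ B := measure_eq_zero_iff_ae_notMem.mp hzero
    refine measure_eq_zero_iff_ae_notMem.mpr ?_
    filter_upwards [he, ae_mem_μ01, hBae] with x hx hm hxB h
    have h' : 0 < T x := h
    rcases hx with hx | hx
    · exact hxB ⟨by linarith, hx⟩
    · linarith [hm.1]
  rw [← Measure.map_apply hT measurableSet_Ioi, hmap,
    νnorm_apply_of_pos measurableSet_Ioi (fun y h => h)] at hI
  have : Set.Ioi (0 : ℝ) ∩ Set.Icc 0 1 = Set.Ioc 0 1 := by
    ext y; constructor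
    · rintro ⟨h, h'⟩; exact ⟨h, h'.2⟩
    · rintro h; exact ⟨h.1, h.1.le, h.2⟩
  simp [μ01, Measure.restrict_apply measurableSet_Ioi, this] at hI

/-! ### Fast-switching measure-preserving maps -/

/-- The map which splits `[0,1]` into `N` cells of length `1/N`, stretches the first half of each
cell onto the cell, and the second half onto the reflection of the cell at the origin. -/
def switchMap (N : ℕ) (x : ℝ) : ℝ :=
  if Int.fract (N * x) < 1 / 2 then (⌊N * x⌋ + 2 * Int.fract (N * x)) / N
  else -((⌊N * x⌋ + 2 * Int.fract (N * x) - 1) / N)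

lemma measurable_switchMap (N : ℕ) : Measurable (switchMap N) := by
  unfold switchMap
  refine Measurable.ite (measurableSet_lt (by fun_prop) measurable_const) ?_ ?_ <;> fun_prop

lemma abs_abs_switchMap_sub_le {N : ℕ} (hN : 0 < N) {x : ℝ} (hx : 0 ≤ x) :
    |(|switchMap N x|) - x| ≤ 1 / N := by
  have hN' : (0 : ℝ) < N := by exact_mod_cast hN
  have hf0 := Int.fract_nonneg ((N : ℝ) * x)
  have hf1 := Int.fract_lt_one ((N : ℝ) * x)
  have hfl : (0 : ℝ) ≤ (⌊(N : ℝ) * x⌋ : ℝ) := by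
    exact_mod_cast Int.floor_nonneg.mpr (by positivity)
  have hadd := Int.floor_add_fract ((N : ℝ) * x)
  have hxe : x = (⌊(N : ℝ) * x⌋ + Int.fract ((N : ℝ) * x)) / N := by
    rw [hadd]; field_simp
  unfold switchMap
  generalize (⌊(N : ℝ) * x⌋ : ℝ) = k at *
  generalize Int.fract ((N : ℝ) * x) = r at *
  split_ifs with h
  · rw [abs_of_nonneg (div_nonneg (by linarith) hN'.le), hxe, ← sub_div, abs_div, abs_of_pos hN']
    gcongr
    rw [abs_le]; constructor <;> linarith
  · rw [abs_neg, abs_of_nonneg (div_nonneg (by linarith) hN'.le), hxe, ← sub_div, abs_div,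
      abs_of_pos hN']
    gcongr
    rw [abs_le]; constructor <;> linarith

lemma abs_switchMap_le {N : ℕ} (hN : 0 < N) {x : ℝ} (hx : x ∈ Set.Icc (0 : ℝ) 1) :
    |switchMap N x| ≤ 2 := by
  have h := (abs_le.mp (abs_abs_switchMap_sub_le hN hx.1)).2
  have h1 : (1 : ℝ) / N ≤ 1 := by
    rw [div_le_one (by exact_mod_cast hN)]; exact_mod_cast hN
  linarith [hx.2]

lemma switchMap_first {N : ℕ} (hN : 0 < N) (i : ℕ) {x : ℝ} (h1 : (i : ℝ) / N < x)
    (h2 : x < (i + 1 / 2) / N) : switchMap N x = 2 * x - i / N := by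
  have hN' : (0 : ℝ) < N := by exact_mod_cast hN
  rw [div_lt_iff₀ hN'] at h1
  rw [lt_div_iff₀ hN'] at h2
  have hfl : ⌊(N : ℝ) * x⌋ = (i : ℤ) := by
    rw [Int.floor_eq_iff]; push_cast; constructor <;> linarith
  have hfr : Int.fract ((N : ℝ) * x) = N * x - i := by
    rw [Int.fract, hfl]; push_cast; rfl
  rw [switchMap, hfr, hfl, if_pos (by linarith)]
  push_cast; field_simp; ring

lemma switchMap_second {N : ℕ} (hN : 0 < N) (i : ℕ) {x : ℝ} (h1 : (i + 1 / 2 : ℝ) / N < x)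
    (h2 : x < (i + 1) / N) : switchMap N x = (i + 1) / N - 2 * x := by
  have hN' : (0 : ℝ) < N := by exact_mod_cast hN
  rw [div_lt_iff₀ hN'] at h1
  rw [lt_div_iff₀ hN'] at h2
  have hfl : ⌊(N : ℝ) * x⌋ = (i : ℤ) := by
    rw [Int.floor_eq_iff]; push_cast; constructor <;> linarith
  have hfr : Int.fract ((N : ℝ) * x) = N * x - i := by
    rw [Int.fract, hfl]; push_cast; rfl
  rw [switchMap, hfr, hfl, if_neg (by linarith)]
  push_cast; field_simp; ring

lemma intervalIntegrable_switchMap {N : ℕ} (hN : 0 < N) {f : ℝ → ℝ} (hf : Continuous f)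
    {a b : ℝ} (ha : 0 ≤ a) (hab : a ≤ b) (hb : b ≤ 1) :
    IntervalIntegrable (fun x => f (switchMap N x)) volume a b := by
  have h : Integrable (fun x => f (switchMap N x)) μ01 :=
    integrable_comp_μ01 (measurable_switchMap N)
      (ae_mem_μ01.mono fun x hx => abs_switchMap_le hN hx) hf
  rw [intervalIntegrable_iff_integrableOn_Ioc_of_le hab]
  exact IntegrableOn.mono_set (t := Set.Icc 0 1) h
    (fun x hx => ⟨ha.trans hx.1.le, hx.2.trans hb⟩)

/-- The change of variables on a single cell. -/
lemma integral_cell {N : ℕ} (hN : 0 < N) {i : ℕ} (hi : i < N) {f : ℝ → ℝ} (hf : Continuous f) :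
    ∫ x in (i / N : ℝ)..((i + 1 : ℕ) / N : ℝ), f (switchMap N x)
      = 2⁻¹ * ∫ x in (i / N : ℝ)..((i + 1 : ℕ) / N : ℝ), (f x + f (-x)) := by
  have hN' : (0 : ℝ) < N := by exact_mod_cast hN
  have hi' : (i : ℝ) + 1 ≤ N := by exact_mod_cast hi
  have l0 : (0 : ℝ) ≤ i / N := by positivity
  have l1 : (i / N : ℝ) ≤ (i + 1 / 2) / N := by gcongr; linarith
  have l2 : ((i + 1 / 2) / N : ℝ) ≤ (i + 1) / N := by gcongr; linarith
  have l3 : ((i + 1) / N : ℝ) ≤ 1 := by rw [div_le_one hN']; exact hi'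
  push_cast
  rw [← intervalIntegral.integral_add_adjacent_intervals
      (intervalIntegrable_switchMap hN hf l0 l1 (l2.trans l3))
      (intervalIntegrable_switchMap hN hf (l0.trans l1) l2 l3),
    intervalIntegral.integral_congr_Ioo_of_le (g := fun x => f (2 * x - i / N)) l1
      (fun x hx => by simp only [switchMap_first hN i hx.1 hx.2]),
    intervalIntegral.integral_congr_Ioo_of_le (g := fun x => f ((i + 1) / N - 2 * x)) l2
      (fun x hx => by simp only [switchMap_second hN i hx.1 hx.2]),
    intervalIntegral.integral_comp_mul_sub f two_ne_zero,
    intervalIntegral.integral_comp_sub_mul f two_ne_zero,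
    intervalIntegral.integral_add (hf.intervalIntegrable _ _)
      (Continuous.intervalIntegrable (by fun_prop : Continuous fun x => f (-x)) _ _),
    intervalIntegral.integral_comp_neg]
  have e1 : (2 * (i / N) - i / N : ℝ) = i / N := by ring
  have e2 : (2 * ((i + 1 / 2) / N) - i / N : ℝ) = (i + 1) / N := by ring
  have e3 : ((i + 1) / N - 2 * ((i + 1) / N) : ℝ) = -((i + 1) / N) := by ring
  have e4 : ((i + 1) / N - 2 * ((i + 1 / 2) / N) : ℝ) = -(i / N) := by ring
  rw [e1, e2, e3, e4, smul_eq_mul, smul_eq_mul, mul_add]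

/-- `switchMap N` transports `μ` to `ν`, tested against continuous functions. -/
lemma integral_switchMap {N : ℕ} (hN : 0 < N) {f : ℝ → ℝ} (hf : Continuous f) :
    ∫ x, f (switchMap N x) ∂μ01 = ∫ y, f y ∂νnorm := by
  have hN' : (0 : ℝ) < N := by exact_mod_cast hN
  rw [integral_μ01, integral_νnorm hf]
  have hc : Continuous fun x => f x + f (-x) := by fun_prop
  have s1 := intervalIntegral.sum_integral_adjacent_intervals (μ := volume) (n := N)
    (a := fun k : ℕ => (k : ℝ) / N) (f := fun x => f (switchMap N x)) (fun k hk => by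
      refine intervalIntegrable_switchMap hN hf (by positivity) ?_ ?_
      · gcongr; simp
      · rw [div_le_one hN']; exact_mod_cast hk)
  have s2 := intervalIntegral.sum_integral_adjacent_intervals (μ := volume) (n := N)
    (a := fun k : ℕ => (k : ℝ) / N) (f := fun x => f x + f (-x))
    (fun k _ => hc.intervalIntegrable _ _)
  simp only [Nat.cast_zero, zero_div, div_self hN'.ne'] at s1 s2
  rw [← s1, ← s2, Finset.mul_sum]
  exact Finset.sum_congr rfl fun i hi => integral_cell hN (Finset.mem_range.mp hi) hf

lemma convexDom_switchMap {N : ℕ} (hN : 0 < N) :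
    ConvexDom (μ01.map (switchMap N)) νnorm := by
  have hm := measurable_switchMap N
  refine ⟨?_, integrable_νnorm continuous_norm, fun φ hφ _ => ?_⟩
  · rw [integrable_map_measure continuous_norm.aestronglyMeasurable hm.aemeasurable]
    exact integrable_comp_μ01 hm (ae_mem_μ01.mono fun x hx => abs_switchMap_le hN hx)
      continuous_norm
  · have hc : Continuous φ := continuousOn_univ.mp (hφ.continuousOn isOpen_univ)
    rw [integral_map hm.aemeasurable hc.aestronglyMeasurable, integral_switchMap hN hc]

lemma cost_switchMap_le {N : ℕ} (hN : 0 < N) :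
    ∫ x, (x ^ 2 - switchMap N x ^ 2) ^ 2 ∂μ01 ≤ 9 * (1 / N) ^ 2 := by
  have hpt : ∀ᵐ x ∂μ01, (x ^ 2 - switchMap N x ^ 2) ^ 2 ≤ 9 * (1 / (N : ℝ)) ^ 2 := by
    filter_upwards [ae_mem_μ01] with x hx
    have h1 := abs_abs_switchMap_sub_le hN hx.1
    have h2 := abs_switchMap_le hN hx
    have h0 := abs_nonneg (switchMap N x)
    rw [← sq_abs (switchMap N x)]
    generalize |switchMap N x| = y at *
    have h3 : (y - x) ^ 2 ≤ (1 / (N : ℝ)) ^ 2 := sq_le_sq' (abs_le.mp h1).1 (abs_le.mp h1).2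
    have h4 : (y + x) ^ 2 ≤ 9 := by nlinarith [hx.1, hx.2]
    calc (x ^ 2 - y ^ 2) ^ 2 = (y + x) ^ 2 * (y - x) ^ 2 := by ring
      _ ≤ 9 * (1 / (N : ℝ)) ^ 2 := by gcongr
  calc ∫ x, (x ^ 2 - switchMap N x ^ 2) ^ 2 ∂μ01 ≤ ∫ _, 9 * (1 / (N : ℝ)) ^ 2 ∂μ01 :=
        integral_mono_of_nonneg (Eventually.of_forall fun x => sq_nonneg _)
          (integrable_const _) hpt
    _ = 9 * (1 / N) ^ 2 := by simp

/-- **Non-existence of a minimizer in a Monge problem with convex dominance, cost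
`(x² − y²)²`.** Let `μ` be Lebesgue measure on `[0,1]`, `ν` the normalized Lebesgue
measure on `[−1,1]`, and `h(x,y) = (x² − y²)²`. The infimum of `∫₀¹ h(x, T(x)) dx` over
Borel maps `T : [0,1] → ℝ` with `μ∘T⁻¹ ≼_c ν` equals `0` and is not attained: all costs
are nonnegative, there is no admissible `T` of zero cost, while there is a sequence of
admissible Borel maps `T_n` whose costs tend to `0`. -/
theorem monge_convexDom_infimum_not_attained_squares :
    (∀ T : ℝ → ℝ, Measurable T → ConvexDom (μ01.map T) νnorm →
      0 ≤ ∫ x, (x ^ 2 - T x ^ 2) ^ 2 ∂μ01) ∧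
    (¬ ∃ T : ℝ → ℝ, Measurable T ∧ ConvexDom (μ01.map T) νnorm ∧
      ∫ x, (x ^ 2 - T x ^ 2) ^ 2 ∂μ01 = 0) ∧
    (∃ T : ℕ → ℝ → ℝ,
      (∀ n, Measurable (T n) ∧ ConvexDom (μ01.map (T n)) νnorm) ∧
      Tendsto (fun n => ∫ x, (x ^ 2 - T n x ^ 2) ^ 2 ∂μ01) atTop (nhds 0)) := by
  refine ⟨fun T _ _ => integral_nonneg fun x => sq_nonneg _, ?_, ?_⟩
  · rintro ⟨T, hT, hd, h0⟩
    exact not_zero_cost hT hd h0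
  · refine ⟨fun n => switchMap (n + 1), fun n =>
      ⟨measurable_switchMap _, convexDom_switchMap n.succ_pos⟩, ?_⟩
    refine squeeze_zero (fun n => integral_nonneg fun x => sq_nonneg _)
      (fun n => cost_switchMap_le n.succ_pos) ?_
    have h := (tendsto_one_div_add_atTop_nhds_zero_nat (𝕜 := ℝ)).pow 2 |>.const_mul 9
    simpa using h
end
end
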